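/- arXiv:0712.1074 — 2 statements merged into one kernel-verified Lean document; each statement's English description precedes it below -/
import Mathlib

section
/- Let M > 0 be real, p ≥ 5 an integer, and let Λ₁, Λ₂ ⊆ F_2^n be disjoint sets whose union belongs to the family 𝚲(4p). Let Q ⊆ Λ₁ + Λ₂. For λ ∈ Λ₁ set D(λ) = { λ' ∈ Λ₂ : λ + λ' ∈ Q }; let s₂ = |Λ₂|, let λ_1, …, λ_{s₁} be the elements of Λ₁ with D(λ) ≠ ∅, and write D_j = D(λ_j). Assume |Q| ≥ max{ 2s₂p, 2^8 s₂ p M^8 }, set δ₀ = max{ p log(2eM)/log(|Q|/(s₂p)), 1 } and X = max{ δ₀^{4δ₀}, 1 }. Then T_p(Q) ≤ 2^{5p} X p^{3p} s₂^p · Σ_{r=p−⌈δ₀⌉}^{p} (1/(p s₂))^r · ( Σ_{S ⊆ [s₁], |S| = r} Π_{α∈S} ( Σ_{β∈S} |D_α ∩ D_β| ) ) + p^{2p}|Q|^p/(2M^p). Here log denotes the logarithm to base 2. -/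
open Finset Pointwise

/-- `T_k(A)`: the number of `2k`-tuples `(a_1,…,a_k,a'_1,…,a'_k) ∈ A^{2k}` with
`a_1+⋯+a_k = a'_1+⋯+a'_k`. -/
def addEnergy {G : Type*} [AddCommGroup G] [DecidableEq G] (k : ℕ) (A : Finset G) : ℕ :=
  (((Fintype.piFinset fun _ : Fin k => A) ×ˢ (Fintype.piFinset fun _ : Fin k => A)).filter
    fun v => ∑ i, v.1 i = ∑ i, v.2 i).card

/-- `Λ` belongs to the family `𝚲(m)`: no nonempty subset of `Λ` of size at most `m`
has zero sum. -/
def InLambdaFamily {G : Type*} [AddCommGroup G] (m : ℕ) (Λ : Finset G) : Prop :=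
  ∀ S ⊆ Λ, S.Nonempty → S.card ≤ m → ∑ x ∈ S, x ≠ 0

/-!
Write each element of `Q` as `a + b` with `a ∈ Λ₁`, `b ∈ Λ₂`. Since `Λ₁ ∪ Λ₂` is dissociated, a
solution counted by `T_p(Q)` is a sequence of `2p` pairs in which every `a` and every `b` occurs an
even number of times. Match the indices in pairs with equal `a`, and also in pairs with equal `b`.
The union of the two matchings consists of even cycles, so half of the indices, `B`, already see
every `a` that occurs, while each `b` is shared between `B` and its complement. Hence for each
index of `B` the common `b` lies in an intersection `D α ∩ D β`, which bounds the number of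
solutions using a given set `S` of first coordinates by a product of `∑_{β ∈ S} |D α ∩ D β|`.

Sorting by `r = |S|`, the terms with `r ≥ p - d` form the main sum. For smaller `r`, bound
`|D α ∩ D β|` by `|D α|` and use `e_r ≤ e_1 ^ r / r!` with `e_1 = ∑ |D α| ≤ |Q|`; these terms decay
like `A ^ (-(p - r))` for `A = |Q| / (s₂ p) ≥ 2`. The choice of `δ₀` makes `A ^ ⌈δ₀⌉` at least
`(2eM) ^ p`.
-/

section Involutions

variable {I V W : Type*}

lemma exists_involutive_ne_of_even_card [Fintype I] (h : Even (Fintype.card I)) :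
    ∃ a : I → I, a.Involutive ∧ ∀ i, a i ≠ i := by
  obtain ⟨k, hk⟩ := h
  have e : I ≃ Fin k × Bool := Fintype.equivOfCardEq (by simp [hk, mul_two])
  refine ⟨fun i => e.symm ((e i).1, !(e i).2), fun i => by simp, fun i hi => ?_⟩
  simpa using congrArg (fun j => (e j).2) hi

/-- `f` takes every value an even number of times. -/
def EvenFibers [Fintype I] [DecidableEq V] (f : I → V) : Prop :=
  ∀ v, Even #{i | f i = v}

lemma EvenFibers.exists_involutive_ne [Fintype I] [DecidableEq V] {f : I → V}
    (hf : EvenFibers f) :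
    ∃ a : I → I, a.Involutive ∧ (∀ i, a i ≠ i) ∧ ∀ i, f (a i) = f i := by
  have hfiber (v : V) : ∃ a : {i // f i = v} → {i // f i = v}, a.Involutive ∧ ∀ i, a i ≠ i :=
    exists_involutive_ne_of_even_card (by rw [Fintype.card_subtype]; exact hf v)
  choose a a_invol a_ne using hfiber
  have eq_of_mem {v : V} {i : I} (hi : f i = v) : (a (f i) ⟨i, rfl⟩ : I) = a v ⟨i, hi⟩ := by
    subst hi; rfl
  refine ⟨fun i => a (f i) ⟨i, rfl⟩, fun i => ?_, fun i hi => a_ne _ ⟨i, rfl⟩ (Subtype.ext hi),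
    fun i => (a (f i) ⟨i, rfl⟩).2⟩
  exact (eq_of_mem (a (f i) ⟨i, rfl⟩).2).trans (congrArg Subtype.val (a_invol _ ⟨i, rfl⟩))

-- Cancelling `a` and `b` from the two ends of `a (b a) ⋯ (b a)` leaves a shorter word of the same
-- shape, down to `a` or `b` alone.
lemma iterate_comp_ne_of_involutive {a b : I → I} (ha : a.Involutive) (hb : b.Involutive)
    (ha' : ∀ i, a i ≠ i) (hb' : ∀ i, b i ≠ i) (k : ℕ) (i : I) : (a ∘ b)^[k] i ≠ a i := by
  induction k using Nat.twoStepInduction generalizing i with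
  | zero => exact (ha' i).symm
  | one => exact fun h => hb' i (ha.injective h)
  | more k ih _ =>
    intro h
    rw [Function.iterate_succ_apply, Function.iterate_succ_apply'] at h
    apply ih (a (b i))
    rw [ha (b i)]
    exact hb.injective.eq_iff.1 (by rw [hb i]; exact ha.injective h)

lemma exists_alternating_coloring [Finite I] {a b : I → I} (ha : a.Involutive)
    (hb : b.Involutive) (ha' : ∀ i, a i ≠ i) (hb' : ∀ i, b i ≠ i) :
    ∃ c : I → Prop, (∀ i, c (a i) ↔ ¬ c i) ∧ ∀ i, c (b i) ↔ ¬ c i := by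
  let ρ : Equiv.Perm I := ha.toPerm * hb.toPerm
  let cycle (i : I) : Quotient (Equiv.Perm.SameCycle.setoid ρ) := ⟦i⟧
  have cycle_ne (i : I) : cycle i ≠ cycle (a i) := fun h => by
    obtain ⟨k, -, hk⟩ := (Quotient.exact h : ρ.SameCycle i (a i)).exists_pow_eq'
    rw [← Equiv.Perm.iterate_eq_pow] at hk
    exact iterate_comp_ne_of_involutive ha hb ha' hb' k i hk
  have cycle_a_b (i : I) : cycle (a (b i)) = cycle i :=
    Quotient.sound (Equiv.Perm.sameCycle_apply_left.2 (.refl ρ i))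
  have cycle_b (i : I) : cycle (b i) = cycle (a i) := by
    rw [← cycle_a_b (b i), hb i]
  obtain ⟨_, -⟩ := exists_wellFoundedLT (Quotient (Equiv.Perm.SameCycle.setoid ρ))
  refine ⟨fun i => cycle i < cycle (a i), fun i => ?_, fun i => ?_⟩
  · simp only [ha i, not_lt, (cycle_ne i).symm.le_iff_lt]
  · simp only [cycle_b, cycle_a_b, not_lt, (cycle_ne i).symm.le_iff_lt]

-- Colour the union of an `f`-preserving and a `g`-preserving perfect matching with two colours:
-- its cycles are even since the two matchings alternate along them.
lemma exists_equiv_compl_of_evenFibers [Fintype I] [DecidableEq I] [DecidableEq V] [DecidableEq W]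
    {f : I → V} {g : I → W} (hf : EvenFibers f) (hg : EvenFibers g) :
    ∃ (B : Finset I) (τ : B ≃ ↥Bᶜ), B.image f = univ.image f ∧ ∀ i, g (τ i) = g i := by
  classical
  obtain ⟨a, a_invol, a_ne, f_a⟩ := hf.exists_involutive_ne
  obtain ⟨b, b_invol, b_ne, g_b⟩ := hg.exists_involutive_ne
  obtain ⟨c, c_a, c_b⟩ := exists_alternating_coloring a_invol b_invol a_ne b_ne
  refine ⟨({i | c i} : Finset I), b_invol.toPerm.subtypeEquiv fun i => by simp [c_b], ?_,
    fun i => g_b i⟩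
  refine (image_subset_image (subset_univ _)).antisymm fun v hv => ?_
  obtain ⟨i, -, rfl⟩ := mem_image.1 hv
  by_cases hi : c i
  · exact mem_image_of_mem f (by simpa using hi)
  · exact mem_image.2 ⟨a i, by simpa [c_a] using hi, f_a i⟩

end Involutions

section Counting

variable {I V W : Type*}

lemma prod_comp_le_pow_mul_prod_image {R : Type*} [CommSemiring R] [PartialOrder R]
    [IsOrderedRing R] [DecidableEq V] {s : Finset I} {f : I → V} {w : V → R} {C : R}
    (hw : ∀ i ∈ s, 0 ≤ w (f i)) (hC : ∀ i ∈ s, w (f i) ≤ C) :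
    ∏ i ∈ s, w (f i) ≤ C ^ (#s - #(s.image f)) * ∏ v ∈ s.image f, w v := by
  classical
  obtain ⟨t, hts, f_inj, image_eq⟩ := exists_subset_injOn_image_eq_of_surjOn s (s.image f)
    (by rw [coe_image]; exact Set.surjOn_image f s)
  have card_rest : #(s \ t) = #s - #(s.image f) := by
    rw [card_sdiff_of_subset hts, ← image_eq, card_image_of_injOn f_inj]
  have prod_rest : ∏ i ∈ s \ t, w (f i) ≤ C ^ (#s - #(s.image f)) := by
    rw [← card_rest, ← prod_const]
    exact prod_le_prod (fun i hi => hw i (sdiff_subset hi)) fun i hi => hC i (sdiff_subset hi)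
  rw [← prod_sdiff hts, ← image_eq, prod_image f_inj, image_eq]
  exact mul_le_mul_of_nonneg_right prod_rest (prod_nonneg fun i hi => hw i (hts hi))

lemma factorial_mul_sum_powersetCard_prod_le {R : Type*} [CommSemiring R] [PartialOrder R]
    [IsOrderedRing R] {A : Finset V} {d : V → R} (hd : ∀ a ∈ A, 0 ≤ d a) (r : ℕ) :
    (r.factorial : R) * ∑ S ∈ A.powersetCard r, ∏ a ∈ S, d a ≤ (∑ a ∈ A, d a) ^ r := by
  classical
  let ind (S : Finset V) (a : V) : ℕ := if a ∈ S then 1 else 0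
  have ind_inj : Function.Injective ind := fun S T h => by
    ext a
    have := congrFun h a
    by_cases a ∈ S <;> by_cases a ∈ T <;> simp_all [ind]
  have ind_mem : ∀ S ∈ A.powersetCard r, ind S ∈ A.piAntidiag r := fun S hS => by
    obtain ⟨hSA, rfl⟩ := mem_powersetCard.1 hS
    refine mem_piAntidiag.2 ⟨?_, fun a ha => hSA (by simpa [ind] using ha)⟩
    simp [ind, sum_ite_mem, inter_eq_right.2 hSA]
  have multinomial_ind : ∀ S ∈ A.powersetCard r, Nat.multinomial A (ind S) = r.factorial :=
    fun S hS => by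
      rw [← (mem_piAntidiag.1 (ind_mem S hS)).1, ← Nat.multinomial_spec, prod_eq_one, one_mul]
      intro a _
      by_cases a ∈ S <;> simp_all [ind]
  have prod_ind : ∀ S ∈ A.powersetCard r, ∏ a ∈ A, d a ^ ind S a = ∏ a ∈ S, d a := fun S hS => by
    simp [ind, pow_ite, prod_ite_mem, inter_eq_right.2 (mem_powersetCard.1 hS).1]
  rw [sum_pow_eq_sum_piAntidiag, mul_sum]
  calc ∑ S ∈ A.powersetCard r, (r.factorial : R) * ∏ a ∈ S, d a
      = ∑ k ∈ (A.powersetCard r).image ind, (Nat.multinomial A k : R) * ∏ a ∈ A, d a ^ k a := by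
        rw [sum_image ind_inj.injOn]
        exact sum_congr rfl fun S hS => by rw [multinomial_ind S hS, prod_ind S hS]
    _ ≤ _ := sum_le_sum_of_subset_of_nonneg (image_subset_iff.2 ind_mem) fun k _ _ =>
        mul_nonneg (Nat.cast_nonneg _) (prod_nonneg fun a ha => pow_nonneg (hd a ha) _)

/-- The sum over the `r`-element sets `S ⊆ A` of `∏_{a ∈ S} ∑_{b ∈ S} |D a ∩ D b|`. -/
def overlapSum [DecidableEq W] (D : V → Finset W) (A : Finset V) (r : ℕ) : ℕ :=
  ∑ S ∈ A.powersetCard r, ∏ a ∈ S, ∑ b ∈ S, #(D a ∩ D b)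

lemma factorial_mul_overlapSum_le [DecidableEq W] (D : V → Finset W) (A : Finset V) (r : ℕ) :
    r.factorial * overlapSum D A r ≤ (r * ∑ a ∈ A, #(D a)) ^ r := by
  have prod_le : ∀ S ∈ A.powersetCard r,
      ∏ a ∈ S, ∑ b ∈ S, #(D a ∩ D b) ≤ r ^ r * ∏ a ∈ S, #(D a) := fun S hS => by
    rw [← (mem_powersetCard.1 hS).2, ← prod_const, ← prod_mul_distrib]
    exact prod_le_prod' fun a _ =>
      sum_le_card_nsmul _ _ _ fun b _ => card_le_card inter_subset_left
  calc r.factorial * overlapSum D A r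
      ≤ r.factorial * ∑ S ∈ A.powersetCard r, r ^ r * ∏ a ∈ S, #(D a) := by
        gcongr; exact sum_le_sum prod_le
    _ = r ^ r * (r.factorial * ∑ S ∈ A.powersetCard r, ∏ a ∈ S, #(D a)) := by
        rw [← mul_sum, mul_left_comm]
    _ ≤ r ^ r * (∑ a ∈ A, #(D a)) ^ r := by
        gcongr
        simpa using factorial_mul_sum_powersetCard_prod_le (A := A) (d := fun a => #(D a))
          (fun _ _ => Nat.zero_le _) r
    _ = _ := (mul_pow _ _ r).symm

lemma card_sigma_piFinset_sigma_le [Fintype I] [DecidableEq I] [DecidableEq V] [DecidableEq W]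
    {D : V → Finset W} {S : Finset V} {s : ℕ} (hD : ∀ a ∈ S, #(D a) ≤ s) :
    #(({α ∈ Fintype.piFinset fun _ : I => S | univ.image α = S}).sigma fun α =>
        Fintype.piFinset fun i => S.sigma fun b => D (α i) ∩ D b) ≤
      #S ^ Fintype.card I * ((#S * s) ^ (Fintype.card I - #S) *
        ∏ a ∈ S, ∑ b ∈ S, #(D a ∩ D b)) := by
  simp only [card_sigma, Fintype.card_piFinset]
  refine (sum_le_card_nsmul _ _ ((#S * s) ^ (Fintype.card I - #S) *
    ∏ a ∈ S, ∑ b ∈ S, #(D a ∩ D b)) fun α hα => ?_).trans ?_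
  · obtain ⟨hαS, image_eq⟩ := mem_filter.1 hα
    have overlap_le (i : I) : ∑ b ∈ S, #(D (α i) ∩ D b) ≤ #S * s :=
      sum_le_card_nsmul _ _ _ fun b _ =>
        (card_le_card inter_subset_left).trans (hD _ (Fintype.mem_piFinset.1 hαS i))
    simpa only [image_eq, card_univ] using prod_comp_le_pow_mul_prod_image (s := univ) (f := α)
      (w := fun a => ∑ b ∈ S, #(D a ∩ D b)) (fun _ _ => Nat.zero_le _) fun i _ => overlap_le i
  · rw [smul_eq_mul]
    gcongr
    exact (card_filter_le _ _).trans (by simp)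

/-- `u = (f, g)` takes its values in the graph of the relation `g i ∈ D (f i)`, the set of values of
`f` is `S` and already exhausted on `B`, and `g` is invariant under the matching `τ` of `B` with its
complement. Such a `u` is determined by `f` and by the restriction of `g` to `B`. -/
structure IsMatched [Fintype I] [DecidableEq I] [DecidableEq V] (D : V → Finset W) {B : Finset I}
    (τ : B ≃ ↥Bᶜ) (S : Finset V) (u : I → V × W) : Prop where
  snd_mem : ∀ i, (u i).2 ∈ D (u i).1
  fst_mem : ∀ i, (u i).1 ∈ S
  image_fst : B.image (fun i => (u i).1) = S
  snd_apply : ∀ i, (u (τ i)).2 = (u i).2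

lemma card_le_of_isMatched [Fintype I] [DecidableEq I] [DecidableEq V] [DecidableEq W]
    {D : V → Finset W} {B : Finset I} {τ : B ≃ ↥Bᶜ} {S : Finset V} {s : ℕ}
    (hD : ∀ a ∈ S, #(D a) ≤ s) {F : Finset (I → V × W)} (hF : ∀ u ∈ F, IsMatched D τ S u) :
    #F ≤ #S ^ #B * ((#S * s) ^ (#B - #S) * ∏ a ∈ S, ∑ b ∈ S, #(D a ∩ D b)) := by
  let split (u : I → V × W) : Σ _ : B → V, B → Σ _ : V, W :=
    ⟨fun i => (u i).1, fun i => ⟨(u (τ i)).1, (u i).2⟩⟩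
  have card_le := card_sigma_piFinset_sigma_le (I := B) hD
  rw [Fintype.card_coe] at card_le
  refine (card_le_card_of_injOn split (fun u hu => ?_) fun u hu v hv huv => ?_).trans card_le
  · have hu := hF u hu
    have snd_mem_inter (i : B) : (u i).2 ∈ D (u i).1 ∩ D (u (τ i)).1 :=
      mem_inter.2 ⟨hu.snd_mem i, hu.snd_apply i ▸ hu.snd_mem (τ i)⟩
    simp only [split, coe_sigma, Set.mem_sigma_iff, mem_coe, mem_filter, Fintype.mem_piFinset,
      mem_sigma]
    refine ⟨⟨fun i => hu.fst_mem i, ?_⟩, fun i => ⟨hu.fst_mem _, snd_mem_inter i⟩⟩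
    ext v
    simp [← hu.image_fst]
  · have hu := hF u hu
    have hv := hF v hv
    simp only [split, Sigma.mk.injEq, funext_iff, heq_eq_eq] at huv
    obtain ⟨fst_eq, rest_eq⟩ := huv
    have eq_on (i : B) : u i = v i := Prod.ext (fst_eq i) (rest_eq i).2
    have eq_off (i : B) : u (τ i) = v (τ i) :=
      Prod.ext (rest_eq i).1 (by rw [hu.snd_apply, hv.snd_apply, eq_on i])
    ext1 i
    by_cases hi : i ∈ B
    · exact eq_on ⟨i, hi⟩
    · simpa using eq_off (τ.symm ⟨i, mem_compl.2 hi⟩)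

lemma exists_isMatched [Fintype I] [DecidableEq I] [DecidableEq V] [DecidableEq W]
    {D : V → Finset W} {p : ℕ} (hI : Fintype.card I = 2 * p) {u : I → V × W}
    (snd_mem : ∀ i, (u i).2 ∈ D (u i).1) (even_fst : EvenFibers fun i => (u i).1)
    (even_snd : EvenFibers fun i => (u i).2) :
    ∃ (B : Finset I) (τ : B ≃ ↥Bᶜ), #B = p ∧ IsMatched D τ (B.image fun i => (u i).1) u := by
  obtain ⟨B, τ, image_fst, snd_apply⟩ := exists_equiv_compl_of_evenFibers even_fst even_snd
  refine ⟨B, τ, ?_, snd_mem, fun i => image_fst ▸ mem_image_of_mem _ (mem_univ i), rfl, snd_apply⟩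
  have card_eq := Fintype.card_congr τ
  have card_add := card_add_card_compl B
  simp only [Fintype.card_coe] at card_eq
  omega

lemma card_equiv_compl_le [Fintype I] [DecidableEq I] (B : Finset I) :
    Fintype.card (B ≃ ↥Bᶜ) ≤ (#B).factorial := by
  cases isEmpty_or_nonempty (B ≃ ↥Bᶜ) with
  | inl _ => rw [Fintype.card_eq_zero]; exact Nat.zero_le _
  | inr h => rw [Fintype.card_equiv h.some, Fintype.card_coe]

lemma card_le_of_evenFibers [Fintype I] [DecidableEq V] [DecidableEq W]
    {A : Finset V} {D : V → Finset W} {s p : ℕ} (hI : Fintype.card I = 2 * p)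
    (hD : ∀ a ∈ A, #(D a) ≤ s) {F : Finset (I → V × W)}
    (fst_mem : ∀ u ∈ F, ∀ i, (u i).1 ∈ A) (snd_mem : ∀ u ∈ F, ∀ i, (u i).2 ∈ D (u i).1)
    (even_fst : ∀ u ∈ F, EvenFibers fun i => (u i).1)
    (even_snd : ∀ u ∈ F, EvenFibers fun i => (u i).2) :
    #F ≤ ∑ r ∈ range (p + 1), (2 * p).choose p * (p.factorial *
      (r ^ p * ((r * s) ^ (p - r) * overlapSum D A r))) := by
  classical
  have cover : F ⊆ (range (p + 1)).biUnion fun r => (univ.powersetCard p).biUnion fun B =>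
      univ.biUnion fun τ : B ≃ ↥Bᶜ => (A.powersetCard r).biUnion fun S =>
        {u ∈ F | IsMatched D τ S u} := fun u hu => by
    obtain ⟨B, τ, rfl, matched⟩ :=
      exists_isMatched hI (snd_mem u hu) (even_fst u hu) (even_snd u hu)
    simp only [mem_biUnion]
    exact ⟨_, mem_range_succ_iff.2 card_image_le, B, mem_powersetCard_univ.2 rfl, τ, mem_univ τ, _,
      mem_powersetCard.2 ⟨image_subset_iff.2 fun i _ => fst_mem u hu i, rfl⟩,
      mem_filter.2 ⟨hu, matched⟩⟩
  refine (card_le_card cover).trans <| card_biUnion_le.trans <| sum_le_sum fun r _ => ?_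
  rw [← hI, ← card_univ, ← card_powersetCard]
  refine card_biUnion_le_card_mul _ _ _ fun B hB => ?_
  obtain rfl : #B = p := (mem_powersetCard.1 hB).2
  refine (card_biUnion_le_card_mul _ _ _ fun τ _ => ?_).trans
    (Nat.mul_le_mul_right _ (card_equiv_compl_le B))
  refine card_biUnion_le.trans ?_
  rw [overlapSum, mul_sum, mul_sum]
  refine sum_le_sum fun S hS => ?_
  obtain ⟨hSA, rfl⟩ := mem_powersetCard.1 hS
  exact card_le_of_isMatched (τ := τ) (fun a ha => hD a (hSA ha)) fun u hu => (mem_filter.1 hu).2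

end Counting

section Dissociated

variable {G : Type*} [AddCommGroup G] [Module (ZMod 2) G]

lemma nsmul_eq_ite_odd (k : ℕ) (x : G) : k • x = if Odd k then x else 0 := by
  split_ifs with hk
  · obtain ⟨l, rfl⟩ := hk
    rw [add_nsmul, mul_comm, mul_nsmul, ZModModule.char_nsmul_eq_zero, one_nsmul, zero_add]
  · obtain ⟨l, rfl⟩ := Nat.not_odd_iff_even.1 hk
    rw [add_nsmul, ZModModule.add_self]

variable [DecidableEq G]

namespace InLambdaFamily

variable {I : Type*} [Fintype I] {m : ℕ}

lemma evenFibers {Λ : Finset G} (hΛ : InLambdaFamily m Λ) (hI : Fintype.card I ≤ m) {h : I → G}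
    (hmem : ∀ i, h i ∈ Λ) (hsum : ∑ i, h i = 0) : EvenFibers h := by
  let S : Finset G := {v ∈ univ.image h | Odd #{i | h i = v}}
  have sum_S : ∑ v ∈ S, v = 0 := by
    calc ∑ v ∈ S, v = ∑ v ∈ univ.image h, #{i | h i = v} • v := by
          simp only [S, sum_filter, nsmul_eq_ite_odd]
      _ = 0 := by rw [← sum_comp (fun v => v) h, hsum]
  have S_subset : S ⊆ Λ := fun v hv => by
    obtain ⟨i, -, rfl⟩ := mem_image.1 (mem_filter.1 hv).1
    exact hmem i
  have card_S : #S ≤ m := (card_filter_le _ _).trans (card_image_le.trans hI)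
  intro v
  by_contra hv
  rw [Nat.not_even_iff_odd] at hv
  obtain ⟨i, hi⟩ := card_pos.1 hv.pos
  exact hΛ S S_subset ⟨v, mem_filter.2 ⟨mem_image.2 ⟨i, by simpa using hi⟩, hv⟩⟩ card_S sum_S

variable {Λ₁ Λ₂ : Finset G}

lemma evenFibers_of_disjoint (hΛ : InLambdaFamily m (Λ₁ ∪ Λ₂)) (hdisj : Disjoint Λ₁ Λ₂)
    (hI : 2 * Fintype.card I ≤ m) {f g : I → G} (hf : ∀ i, f i ∈ Λ₁) (hg : ∀ i, g i ∈ Λ₂)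
    (hsum : ∑ i, (f i + g i) = 0) : EvenFibers f ∧ EvenFibers g := by
  have even_elim : EvenFibers (Sum.elim f g) := hΛ.evenFibers
    (by rwa [Fintype.card_sum, ← two_mul])
    (Sum.rec (fun i => mem_union_left _ (hf i)) fun i => mem_union_right _ (hg i))
    (by simpa [sum_add_distrib] using hsum)
  have card_elim (v : G) : #{i | Sum.elim f g i = v} = #{i | f i = v} + #{i | g i = v} := by
    simp only [card_filter, Fintype.sum_sum_type, Sum.elim_inl, Sum.elim_inr]
    congr
  have separated (v : G) : #{i | f i = v} = 0 ∨ #{i | g i = v} = 0 := by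
    by_contra! h
    obtain ⟨i, hi⟩ := card_pos.1 (Nat.pos_of_ne_zero h.1)
    obtain ⟨j, hj⟩ := card_pos.1 (Nat.pos_of_ne_zero h.2)
    have f_eq_g : f i = g j := (mem_filter.1 hi).2.trans (mem_filter.1 hj).2.symm
    exact disjoint_left.1 hdisj (hf i) (f_eq_g ▸ hg j)
  refine ⟨fun v => ?_, fun v => ?_⟩ <;>
    obtain h | h := separated v <;> have := card_elim v ▸ even_elim v <;> simp_all

lemma injOn_add (hΛ : InLambdaFamily m (Λ₁ ∪ Λ₂)) (hdisj : Disjoint Λ₁ Λ₂) (hm : 4 ≤ m) :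
    Set.InjOn (fun x : G × G => x.1 + x.2) (Λ₁ ×ˢ Λ₂ : Finset (G × G)) := by
  rintro ⟨a, b⟩ hab ⟨a', b'⟩ hab' (add_eq : a + b = a' + b')
  obtain ⟨ha, hb⟩ := mem_product.1 hab
  obtain ⟨ha', hb'⟩ := mem_product.1 hab'
  have even_fst : EvenFibers ![a, a'] := (hΛ.evenFibers_of_disjoint hdisj (I := Fin 2)
    (f := ![a, a']) (g := ![b, b']) (by simpa) (by simp [Fin.forall_fin_two, *])
    (by simp [Fin.forall_fin_two, *]) (by simp [add_eq, ZModModule.add_self])).1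
  obtain rfl : a = a' := by
    by_contra hne
    have := even_fst a
    rw [card_filter, Fin.sum_univ_two] at this
    simp [Ne.symm hne] at this
  rw [add_left_cancel add_eq]

end InLambdaFamily

/-- The fibre `D(a) = {b ∈ Λ | a + b ∈ Q}`. -/
def addFiber (Q Λ : Finset G) (a : G) : Finset G := {b ∈ Λ | a + b ∈ Q}

lemma InLambdaFamily.sum_card_addFiber_le {Λ₁ Λ₂ : Finset G} {m : ℕ}
    (hΛ : InLambdaFamily m (Λ₁ ∪ Λ₂)) (hdisj : Disjoint Λ₁ Λ₂) (hm : 4 ≤ m) (Q : Finset G) :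
    ∑ a ∈ Λ₁, #(addFiber Q Λ₂ a) ≤ #Q := by
  have : ∑ a ∈ Λ₁, #(addFiber Q Λ₂ a) = #{x ∈ Λ₁ ×ˢ Λ₂ | x.1 + x.2 ∈ Q} := by
    simp only [addFiber, card_filter, sum_product]
  rw [this]
  exact card_le_card_of_injOn (fun x => x.1 + x.2) (fun x hx => (mem_filter.1 hx).2)
    ((hΛ.injOn_add hdisj hm).mono (filter_subset _ _))

lemma addEnergy_eq_card_sum_eq_zero (p : ℕ) (Q : Finset G) :
    _root_.addEnergy p Q =
      #{u ∈ Fintype.piFinset fun _ : Fin p ⊕ Fin p => Q | ∑ i, u i = 0} := by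
  rw [_root_.addEnergy, eq_comm]
  refine card_equiv (Equiv.sumArrowEquivProdArrow _ _ _) fun u => ?_
  simp [Fintype.sum_sum_type, add_eq_zero_iff_eq_neg, ZModModule.neg_eq_self]

lemma exists_card_eq_addEnergy {Λ₁ Λ₂ Q : Finset G} (hQ : Q ⊆ Λ₁ + Λ₂) (p : ℕ) :
    ∃ F : Finset (Fin p ⊕ Fin p → G × G), #F = _root_.addEnergy p Q ∧ ∀ u ∈ F,
      (∀ i, (u i).1 ∈ Λ₁ ∧ (u i).2 ∈ Λ₂ ∧ (u i).1 + (u i).2 ∈ Q) ∧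
        ∑ i, ((u i).1 + (u i).2) = 0 := by
  have exists_rep (q : G) : ∃ x : G × G, q ∈ Q → x.1 ∈ Λ₁ ∧ x.2 ∈ Λ₂ ∧ x.1 + x.2 = q := by
    by_cases hq : q ∈ Q
    · obtain ⟨a, ha, b, hb, rfl⟩ := mem_add.1 (hQ hq)
      exact ⟨(a, b), fun _ => ⟨ha, hb, rfl⟩⟩
    · exact ⟨0, fun h => absurd h hq⟩
  choose rep rep_spec using exists_rep
  let Z : Finset (Fin p ⊕ Fin p → G) := {u ∈ Fintype.piFinset fun _ => Q | ∑ i, u i = 0}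
  have Z_spec : ∀ u ∈ Z, (∀ i, u i ∈ Q) ∧ ∑ i, u i = 0 := fun u hu =>
    (mem_filter.1 hu).imp_left Fintype.mem_piFinset.1
  refine ⟨Z.image fun u i => rep (u i), ?_, fun w hw => ?_⟩
  · rw [addEnergy_eq_card_sum_eq_zero]
    refine card_image_of_injOn fun u hu v hv huv => funext fun i => ?_
    have rep_eq : rep (u i) = rep (v i) := congrFun huv i
    rw [← (rep_spec _ ((Z_spec u hu).1 i)).2.2, rep_eq, (rep_spec _ ((Z_spec v hv).1 i)).2.2]
  · obtain ⟨u, hu, rfl⟩ := mem_image.1 hw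
    obtain ⟨u_mem, sum_u⟩ := Z_spec u hu
    have rep_spec (i) := rep_spec (u i) (u_mem i)
    refine ⟨fun i => ⟨(rep_spec i).1, (rep_spec i).2.1, ?_⟩, ?_⟩
    · rw [(rep_spec i).2.2]; exact u_mem i
    · simpa only [(rep_spec _).2.2] using sum_u

lemma addEnergy_le_sum_overlapSum {p : ℕ} {Λ₁ Λ₂ Q : Finset G} (hdisj : Disjoint Λ₁ Λ₂)
    (hΛ : InLambdaFamily (4 * p) (Λ₁ ∪ Λ₂)) (hQ : Q ⊆ Λ₁ + Λ₂) :
    _root_.addEnergy p Q ≤ ∑ r ∈ range (p + 1), (2 * p).choose p * (p.factorial *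
      (r ^ p * ((r * #Λ₂) ^ (p - r) *
        overlapSum (addFiber Q Λ₂) {a ∈ Λ₁ | (addFiber Q Λ₂ a).Nonempty} r))) := by
  obtain ⟨F, card_F, F_spec⟩ := exists_card_eq_addEnergy hQ p
  have snd_mem : ∀ u ∈ F, ∀ i, (u i).2 ∈ addFiber Q Λ₂ (u i).1 := fun u hu i =>
    mem_filter.2 ((F_spec u hu).1 i).2
  have even_fibers : ∀ u ∈ F, EvenFibers (fun i => (u i).1) ∧ EvenFibers fun i => (u i).2 :=
    fun u hu => hΛ.evenFibers_of_disjoint hdisj (by simp; omega)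
      (fun i => ((F_spec u hu).1 i).1) (fun i => ((F_spec u hu).1 i).2.1) (F_spec u hu).2
  rw [← card_F]
  exact card_le_of_evenFibers (by simp [two_mul]) (fun a _ => card_filter_le _ _)
    (fun u hu i => mem_filter.2 ⟨((F_spec u hu).1 i).1, _, snd_mem u hu i⟩) snd_mem
    (fun u hu => (even_fibers u hu).1) fun u hu => (even_fibers u hu).2

end Dissociated

section Estimates

lemma two_mul_choose_le_four_pow {p : ℕ} (hp : 0 < p) : 2 * (2 * p).choose p ≤ 4 ^ p := by
  obtain ⟨m, rfl⟩ := Nat.exists_eq_add_one.2 hp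
  have choose_eq : (2 * (m + 1)).choose (m + 1) = 2 * (2 * m + 1).choose m := by
    rw [mul_add_one, Nat.choose_succ_succ' (2 * m + 1) m, Nat.choose_symm_half, ← two_mul]
  have := Nat.choose_middle_le_pow m
  rw [choose_eq, pow_succ]
  omega

lemma four_pow_div_two_le_two_pow (p : ℕ) : (4 : ℝ) ^ p / 2 ≤ 2 ^ (5 * p) := by
  refine (div_le_self (by positivity) one_le_two).trans ?_
  rw [pow_mul]
  gcongr
  norm_num

section Field

variable {K : Type*} [Field K] [LinearOrder K] [IsStrictOrderedRing K]

lemma sum_range_inv_pow_sub_le {A : K} (hA : 2 ≤ A) (p d : ℕ) :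
    ∑ r ∈ range (p - d), (A ^ (p - r))⁻¹ ≤ (A ^ d)⁻¹ := by
  have A_pos : 0 < A := two_pos.trans_le hA
  obtain hpd | hdp := le_total p d
  · rw [Nat.sub_eq_zero_of_le hpd, range_zero, sum_empty]
    positivity
  have telescope : ∀ r ∈ range (p - d),
      (A ^ (p - r))⁻¹ ≤ (A ^ (p - (r + 1)))⁻¹ - (A ^ (p - r))⁻¹ := fun r hr => by
    rw [mem_range] at hr
    have exponent : p - r = p - (r + 1) + 1 := by omega
    rw [exponent, pow_succ, mul_inv, le_sub_iff_add_le, ← mul_add]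
    refine mul_le_of_le_one_right (by positivity) ?_
    field_simp
    linarith
  refine (sum_le_sum telescope).trans ?_
  rw [sum_range_sub fun r => (A ^ (p - r))⁻¹, Nat.sub_sub_self hdp]
  exact sub_le_self _ (by positivity)

lemma factorial_mul_pow_mul_le {p r : ℕ} (hp : 0 < p) (hr : r ≤ p) {s P : K} (hs : 0 < s)
    (hP : 0 ≤ P) :
    p.factorial * (r ^ p * ((r * s) ^ (p - r) * P)) ≤
      p ^ (3 * p) * s ^ p * ((1 / (p * s)) ^ r * P) := by
  have factorial_le : (p.factorial : K) ≤ p ^ p := by exact_mod_cast Nat.factorial_le_pow p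
  have : (0 : K) < p := by exact_mod_cast hp
  have hr' : (r : K) ≤ p := by exact_mod_cast hr
  calc (p.factorial : K) * (r ^ p * ((r * s) ^ (p - r) * P))
      ≤ p ^ p * (p ^ p * ((p * s) ^ (p - r) * P)) := by gcongr
    _ = _ := by
        rw [one_div, inv_pow, pow_sub₀ _ (by positivity) hr]
        ring

lemma factorial_mul_pow_mul_le_of_factorial_mul_le {p r : ℕ} (hr : r ≤ p) {s q P : K} (hs : 0 ≤ s)
    (hq : 0 < q) (hP : r.factorial * P ≤ (r * q) ^ r) :
    p.factorial * (r ^ p * ((r * s) ^ (p - r) * P)) ≤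
      p ^ (2 * p) * q ^ p * ((q / (s * p)) ^ (p - r))⁻¹ := by
  have hr' : (r : K) ≤ p := by exact_mod_cast hr
  have factorial_eq : (p.factorial : K) = r.factorial * p.descFactorial (p - r) := by
    rw [← Nat.cast_mul, ← Nat.factorial_mul_descFactorial (Nat.sub_le p r), Nat.sub_sub_self hr]
  have descFactorial_le : (p.descFactorial (p - r) : K) ≤ p ^ (p - r) := by
    exact_mod_cast Nat.descFactorial_le_pow p (p - r)
  calc p.factorial * (r ^ p * ((r * s) ^ (p - r) * P))
      = p.descFactorial (p - r) * (r ^ p * (r * s) ^ (p - r)) * (r.factorial * P) := by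
        rw [factorial_eq]; ring
    _ ≤ p.descFactorial (p - r) * (r ^ p * (r * s) ^ (p - r)) * (r * q) ^ r := by gcongr
    _ ≤ p ^ (p - r) * (p ^ p * (p * s) ^ (p - r)) * (p * q) ^ r := by gcongr
    _ = p ^ (2 * p) * q ^ p * ((q / (s * p)) ^ (p - r))⁻¹ := by
        have pow_split (x : K) : x ^ p = x ^ (p - r) * x ^ r := (pow_sub_mul_pow x hr).symm
        rw [← inv_pow, inv_div, div_pow, mul_pow _ q, two_mul, pow_add, pow_split q,
          pow_split (p : K)]
        field_simp

lemma sum_factorial_mul_pow_mul_le {p : ℕ} (hp : 0 < p) {s q : K} (hs : 0 < s)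
    (hA : 2 ≤ q / (s * p)) {P : ℕ → K} (hP : ∀ r, 0 ≤ P r)
    (factorial_mul_le : ∀ r, r.factorial * P r ≤ (r * q) ^ r) (d : ℕ) :
    ∑ r ∈ range (p + 1), p.factorial * (r ^ p * ((r * s) ^ (p - r) * P r)) ≤
      p ^ (3 * p) * s ^ p * ∑ r ∈ Icc (p - d) p, (1 / (p * s)) ^ r * P r +
        p ^ (2 * p) * q ^ p * ((q / (s * p)) ^ d)⁻¹ := by
  have hq : 0 < q := by
    have : (0 : K) < s * p := by positivity
    linarith [(le_div_iff₀ this).1 hA]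
  rw [← sum_range_add_sum_Ico _ (show p - d ≤ p + 1 by omega), Ico_add_one_right_eq_Icc, add_comm,
    mul_sum]
  refine add_le_add (sum_le_sum fun r hr => factorial_mul_pow_mul_le hp (mem_Icc.1 hr).2 hs (hP r))
    (le_trans ?_ (mul_le_mul_of_nonneg_left (sum_range_inv_pow_sub_le hA p d) (by positivity)))
  rw [mul_sum]
  exact sum_le_sum fun r hr => factorial_mul_pow_mul_le_of_factorial_mul_le
    ((mem_range.1 hr).le.trans (Nat.sub_le p d)) hs.le hq (factorial_mul_le r)

end Field

lemma pow_le_pow_ceil_of_mul_logb_div_le {p : ℕ} {Y A δ : ℝ} (hY : 0 < Y) (hA : 1 < A)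
    (hδ : p * Real.logb 2 Y / Real.logb 2 A ≤ δ) : Y ^ p ≤ A ^ ⌈δ⌉₊ := by
  have : 0 < A := one_pos.trans hA
  have logb_pos : 0 < Real.logb 2 A := Real.logb_pos one_lt_two hA
  rw [← Real.logb_le_logb one_lt_two (by positivity) (by positivity), Real.logb_pow, Real.logb_pow]
  exact ((div_le_iff₀ logb_pos).1 hδ).trans (by gcongr; exact Nat.le_ceil δ)

end Estimates

lemma addEnergy_empty {G : Type*} [AddCommGroup G] [DecidableEq G] {p : ℕ} (hp : 0 < p) :
    _root_.addEnergy p (∅ : Finset G) = 0 := by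
  have : Nonempty (Fin p) := ⟨⟨0, hp⟩⟩
  rw [_root_.addEnergy, Fintype.piFinset_empty, empty_product, filter_empty, card_empty]

section Energy

variable {G : Type*} [AddCommGroup G] [Module (ZMod 2) G] [DecidableEq G] {p : ℕ}
  {Λ₁ Λ₂ Q : Finset G}

lemma factorial_mul_overlapSum_addFiber_le (hp : 0 < p) (hdisj : Disjoint Λ₁ Λ₂)
    (hΛ : InLambdaFamily (4 * p) (Λ₁ ∪ Λ₂)) (r : ℕ) :
    r.factorial * overlapSum (addFiber Q Λ₂) {a ∈ Λ₁ | (addFiber Q Λ₂ a).Nonempty} r ≤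
      (r * #Q) ^ r := by
  refine (factorial_mul_overlapSum_le _ _ r).trans ?_
  gcongr
  exact (sum_le_sum_of_subset (filter_subset _ _)).trans
    (hΛ.sum_card_addFiber_le hdisj (by omega) Q)

theorem addEnergy_le_of_two_le_div (hdisj : Disjoint Λ₁ Λ₂)
    (hΛ : InLambdaFamily (4 * p) (Λ₁ ∪ Λ₂)) (hQ : Q ⊆ Λ₁ + Λ₂)
    (hA : (2 : ℝ) ≤ #Q / (#Λ₂ * p)) (d : ℕ) :
    (_root_.addEnergy p Q : ℝ) ≤ 4 ^ p / 2 * (p ^ (3 * p) * #Λ₂ ^ p *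
      (∑ r ∈ Icc (p - d) p, (1 / (p * #Λ₂ : ℝ)) ^ r *
        overlapSum (addFiber Q Λ₂) {a ∈ Λ₁ | (addFiber Q Λ₂ a).Nonempty} r) +
      p ^ (2 * p) * #Q ^ p * ((#Q / (#Λ₂ * p) : ℝ) ^ d)⁻¹) := by
  have denom_pos : (0 : ℝ) < #Λ₂ * p := by
    by_contra! h
    have denom_eq : (#Λ₂ * p : ℝ) = 0 := h.antisymm (by positivity)
    norm_num [denom_eq] at hA
  have hs : (0 : ℝ) < #Λ₂ := pos_of_mul_pos_left denom_pos (Nat.cast_nonneg _)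
  have hp : 0 < p := by exact_mod_cast pos_of_mul_pos_right denom_pos hs.le
  set P : ℕ → ℕ := overlapSum (addFiber Q Λ₂) {a ∈ Λ₁ | (addFiber Q Λ₂ a).Nonempty}
  have factorial_mul_le (r : ℕ) : (r.factorial * P r : ℝ) ≤ (r * #Q) ^ r := by
    exact_mod_cast factorial_mul_overlapSum_addFiber_le hp hdisj hΛ r
  have choose_le : ((2 * p).choose p : ℝ) ≤ 4 ^ p / 2 := by
    rw [le_div_iff₀' two_pos]
    exact_mod_cast two_mul_choose_le_four_pow hp
  calc (_root_.addEnergy p Q : ℝ)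
      ≤ (2 * p).choose p * ∑ r ∈ range (p + 1),
          (p.factorial * (r ^ p * ((r * #Λ₂) ^ (p - r) * P r)) : ℝ) := by
        rw [mul_sum]
        exact_mod_cast addEnergy_le_sum_overlapSum hdisj hΛ hQ
    _ ≤ _ := by
        gcongr
        exact sum_factorial_mul_pow_mul_le hp hs hA (fun r => Nat.cast_nonneg _) factorial_mul_le d

theorem stmt14_general {M : ℝ} (hM : 0 < M) (hp : 0 < p) (hdisj : Disjoint Λ₁ Λ₂)
    (hΛ : InLambdaFamily (4 * p) (Λ₁ ∪ Λ₂)) (hQ : Q ⊆ Λ₁ + Λ₂) {D : G → Finset G}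
    (hD : ∀ a, D a = {b ∈ Λ₂ | a + b ∈ Q}) {s₂ : ℕ} (hs₂ : s₂ = #Λ₂) {Λ₁' : Finset G}
    (hΛ₁' : Λ₁' = {a ∈ Λ₁ | (D a).Nonempty}) (hQcard : (2 * s₂ * p : ℝ) ≤ #Q) {δ : ℝ}
    (hδ : p * Real.logb 2 (2 * Real.exp 1 * M) / Real.logb 2 (#Q / (s₂ * p)) ≤ δ) :
    (_root_.addEnergy p Q : ℝ) ≤
      4 ^ p / 2 * p ^ (3 * p) * s₂ ^ p * (∑ r ∈ Icc (p - ⌈δ⌉₊) p, (1 / (p * s₂ : ℝ)) ^ r *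
        ∑ S ∈ Λ₁'.powersetCard r, ∏ a ∈ S, ∑ b ∈ S, (#(D a ∩ D b) : ℝ)) +
      p ^ (2 * p) * #Q ^ p / (2 * M ^ p) := by
  obtain rfl : D = addFiber Q Λ₂ := funext hD
  subst hs₂ hΛ₁'
  obtain rfl | Q_nonempty := Q.eq_empty_or_nonempty
  · rw [addEnergy_empty hp, Nat.cast_zero]
    positivity
  have Λ₂_nonempty : Λ₂.Nonempty := (Q_nonempty.mono hQ).of_add_right
  have denom_pos : (0 : ℝ) < #Λ₂ * p := by have := Λ₂_nonempty.card_pos; positivity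
  have hA : (2 : ℝ) ≤ #Q / (#Λ₂ * p) := by rwa [le_div_iff₀ denom_pos, ← mul_assoc]
  have pow_le : (4 * M) ^ p ≤ (#Q / (#Λ₂ * p) : ℝ) ^ ⌈δ⌉₊ := by
    have four_le : 4 ≤ 2 * Real.exp 1 := by linarith [Real.add_one_le_exp 1]
    refine le_trans ?_ (pow_le_pow_ceil_of_mul_logb_div_le (by positivity) (by linarith) hδ)
    gcongr
  have energy_le := addEnergy_le_of_two_le_div hdisj hΛ hQ hA ⌈δ⌉₊
  simp only [overlapSum, Nat.cast_sum, Nat.cast_prod] at energy_le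
  refine energy_le.trans ?_
  rw [mul_add, ← mul_assoc, ← mul_assoc]
  gcongr
  calc (4 : ℝ) ^ p / 2 * (p ^ (2 * p) * #Q ^ p * ((#Q / (#Λ₂ * p) : ℝ) ^ ⌈δ⌉₊)⁻¹)
      ≤ 4 ^ p / 2 * (p ^ (2 * p) * #Q ^ p * ((4 * M) ^ p)⁻¹) := by gcongr
    _ = p ^ (2 * p) * #Q ^ p / (2 * M ^ p) := by rw [mul_pow]; field_simp

end Energy

theorem stmt14 {n : ℕ} (M : ℝ) (hM : 0 < M) (p : ℕ) (hp : 5 ≤ p)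
    (Λ₁ Λ₂ : Finset (Fin n → ZMod 2)) (hdisj : Disjoint Λ₁ Λ₂)
    (hΛ : InLambdaFamily (4 * p) (Λ₁ ∪ Λ₂))
    (Q : Finset (Fin n → ZMod 2)) (hQ : Q ⊆ Λ₁ + Λ₂)
    (D : (Fin n → ZMod 2) → Finset (Fin n → ZMod 2))
    (hD : ∀ l, D l = Λ₂.filter fun l' => l + l' ∈ Q)
    (s₂ : ℕ) (hs₂ : s₂ = Λ₂.card)
    (Λ₁' : Finset (Fin n → ZMod 2))
    (hΛ₁' : Λ₁' = Λ₁.filter fun l => (D l).Nonempty)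
    (hQcard : max (2 * s₂ * p : ℝ) (2 ^ 8 * s₂ * p * M ^ 8) ≤ (Q.card : ℝ))
    (δ₀ X : ℝ)
    (hδ₀ : δ₀ = max ((p * Real.logb 2 (2 * Real.exp 1 * M)) /
      Real.logb 2 ((Q.card : ℝ) / (s₂ * p))) 1)
    (hX : X = max (δ₀ ^ (4 * δ₀)) 1) :
    (addEnergy p Q : ℝ) ≤
      2 ^ (5 * p) * X * (p : ℝ) ^ (3 * p) * (s₂ : ℝ) ^ p *
        (∑ r ∈ Finset.Icc (p - ⌈δ₀⌉₊) p,
          (1 / (p * s₂ : ℝ)) ^ r *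
            ∑ S ∈ Λ₁'.powersetCard r,
              ∏ a ∈ S, (∑ b ∈ S, ((D a ∩ D b).card : ℝ)))
      + (p : ℝ) ^ (2 * p) * (Q.card : ℝ) ^ p / (2 * M ^ p) := by
  have constant_le : (4 : ℝ) ^ p / 2 ≤ 2 ^ (5 * p) * X :=
    (four_pow_div_two_le_two_pow p).trans
      (le_mul_of_one_le_right (by positivity) (hX ▸ le_max_right _ _))
  refine (stmt14_general hM (by omega) hdisj hΛ hQ hD hs₂ hΛ₁' ((le_max_left _ _).trans hQcard)
    (hδ₀ ▸ le_max_left _ _)).trans ?_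
  gcongr
end

section
/- Let K, η > 0 be real numbers with η ∈ (0, 1/2], let p be a positive integer, and let Λ ⊆ F_2^n belong to the family 𝚲(4p). Let Q ⊆ Λ ∔ Λ (sums of two distinct elements of Λ), set K* = max{1, K}, assume p ≥ 2^{30} K*/η and T_p(Q) ≥ p^{2p}|Q|^p/K^p. Suppose in addition p ≤ log|Λ|/log log|Λ| and |Q| ≥ 2^{60 + 2/η} (K*)^{17} p³ |Λ| · max{ (2^{30}(K*)^{11} p)^{ηp} |Λ|^η log|Λ| , exp( log(2^{30}(K*)^{20}) · log((p log K*)/log p) / log(2^{−25} η p/K*) ) }. Then there exist sets 𝓛_1, 𝓛'_1, …, 𝓛_h, 𝓛'_h ⊆ Λ such that 𝓛_i ∩ 𝓛'_j = ∅ and 𝓛_i + 𝓛'_i ⊆ Q for all i, j ∈ [h]; |𝓛_i| ≥ log(|Q|/(16(K*)^9 |Λ|)) / (2^{10} log(2^{20} K*)) and |𝓛'_i| ≥ (1/(2^{10} p²)) · (|Q|/((K*)^9 |Λ|))^η for every i; the sumsets 𝓛_i + 𝓛'_i are pairwise disjoint; and |Q ∩ ((𝓛_1 + 𝓛'_1)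 ⊔ ⋯ ⊔ (𝓛_h + 𝓛'_h))| ≥ |Q|/(16(K*)^9). Here log denotes the logarithm to base 2. -/
open Finset Pointwise

/-- `d ·̇ Λ`: the set of all sums of `d` pairwise distinct elements of `Λ`.
For `d = 2` this is `Λ ∔ Λ`, the set of sums of two distinct elements of `Λ`. -/
def dDot {G : Type*} [AddCommGroup G] [DecidableEq G] (d : ℕ) (Λ : Finset G) : Finset G :=
  (Λ.powersetCard d).image fun S => ∑ x ∈ S, x

/-!
Join `a, b ∈ Λ` by an edge when `a + b ∈ Q`. Since `Λ` has no short relation, this graph has `|Q|`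
edges, and in a zero-sum tuple of sums from `Q` every element of `Λ` is involved evenly often.
Peeling off one term of the tuple at a time, the numbers `w_m` of zero-sum `m`-tuples divided by
`m!` satisfy the Newton-type recursion `(m + 1) w_{m+1} ≤ ∑ w_i tr A^{m-i+1}`, where `A` is the
adjacency matrix. As `tr A² = 2|Q|`, a trace `tr A⁴ < |Q|²/K²` would make `T_p(Q)` too small.

Now `tr A⁴` is the sum over ordered edges `ab` of the number of edges between `N(a)` and `N(b)`, and
few pairs have `deg a · deg b` large. Hence some pair with `deg a · deg b` of order at most `K⁴|Q|`
has about `|Q|/K²` edges between its neighbourhoods, and a random cut makes the two sides disjoint.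
By Kővári–Sós–Turán every not too small subset of these edges contains a large biclique, that is, a
sumset `L + L' ⊆ Q`, so a maximal family of edge-disjoint bicliques misses only `|Q|/(32K²)` of
these edges.
-/

section LambdaFamily

variable {G : Type*} [AddCommGroup G] {m : ℕ} {Λ : Finset G}

theorem InLambdaFamily.even_count [DecidableEq G] [Module (ZMod 2) G] (hΛ : InLambdaFamily m Λ)
    {s : Multiset G} (hsΛ : ∀ x ∈ s, x ∈ Λ) (hsm : s.card ≤ m) (hs : s.sum = 0) (x : G) :
    Even (s.count x) := by
  by_contra hx
  have hxs : x ∈ s := Multiset.count_ne_zero.mp fun h => hx (h ▸ Even.zero)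
  refine hΛ {y ∈ s.toFinset | ¬Even (s.count y)}
    (fun y hy => hsΛ y (Multiset.mem_toFinset.mp (mem_filter.mp hy).1))
    ⟨x, mem_filter.mpr ⟨Multiset.mem_toFinset.mpr hxs, hx⟩⟩
    ((card_filter_le _ _).trans ((Multiset.toFinset_card_le s).trans hsm)) ?_
  rw [← hs, sum_multiset_count, sum_filter]
  refine sum_congr rfl fun y _ => ?_
  rcases Nat.even_or_odd' (s.count y) with ⟨k, hk | hk⟩ <;>
    simp [hk, add_nsmul, mul_nsmul, two_nsmul, ZModModule.add_self]

theorem InLambdaFamily.add_eq_add_iff [Module (ZMod 2) G]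
    (hΛ : InLambdaFamily m Λ) (hm : 4 ≤ m) {a b c d : G} (ha : a ∈ Λ) (hb : b ∈ Λ) (hc : c ∈ Λ)
    (hd : d ∈ Λ) (hab : a ≠ b) : a + b = c + d ↔ s(a, b) = s(c, d) := by
  classical
  refine ⟨fun h => ?_, fun h => ?_⟩
  · have hsum : a + (b + (c + d)) = 0 := by rw [← add_assoc, h, ZModModule.add_self]
    have heven := hΛ.even_count (s := {a, b, c, d}) (by simp [ha, hb, hc, hd]) (by simpa using hm)
      (by simpa using hsum) a
    have hacd : a = c ∨ a = d := by
      by_contra! hne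
      simp [hab, hne.1, hne.2] at heven
    rcases hacd with rfl | rfl
    · rw [add_left_cancel h]
    · rw [Sym2.eq_swap, add_left_cancel (h.trans (add_comm c a))]
  · rcases Sym2.eq_iff.mp h with ⟨rfl, rfl⟩ | ⟨rfl, rfl⟩
    · rfl
    · exact add_comm a b

theorem mem_dDot_two [DecidableEq G] {q : G} :
    q ∈ dDot 2 Λ ↔ ∃ a ∈ Λ, ∃ b ∈ Λ, a ≠ b ∧ a + b = q := by
  simp only [dDot, mem_image, mem_powersetCard, card_eq_two]
  constructor
  · rintro ⟨_, ⟨hS, a, b, hab, rfl⟩, rfl⟩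
    exact ⟨a, hS (by simp), b, hS (by simp), hab, by rw [sum_pair hab]⟩
  · rintro ⟨a, ha, b, hb, hab, rfl⟩
    exact ⟨{a, b}, ⟨by simp [insert_subset_iff, ha, hb], a, b, hab, rfl⟩, sum_pair hab⟩

end LambdaFamily

section SumGraph

variable {G : Type*} [AddCommGroup G] {m : ℕ} {Λ Q : Finset G}

/-- The graph on `Λ` in which two distinct elements are joined when their sum lies in `Q`. When
`Q ⊆ Λ ∔ Λ` and `Λ ∈ 𝚲(4)`, its edges are in bijection with `Q`. -/
def sumGraph (Λ Q : Finset G) : SimpleGraph Λ where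
  Adj a b := a ≠ b ∧ (a + b : G) ∈ Q
  symm := ⟨fun a b h => ⟨h.1.symm, add_comm (a : G) b ▸ h.2⟩⟩
  loopless := ⟨fun _ h => h.1 rfl⟩

instance [DecidableEq G] : DecidableRel (sumGraph Λ Q).Adj :=
  fun a b => inferInstanceAs (Decidable (a ≠ b ∧ (a + b : G) ∈ Q))

theorem exists_sumGraph_adj [DecidableEq G] (hQ : Q ⊆ dDot 2 Λ) {q : G} (hq : q ∈ Q) :
    ∃ a b, (sumGraph Λ Q).Adj a b ∧ (a + b : G) = q := by
  obtain ⟨a, ha, b, hb, hab, rfl⟩ := mem_dDot_two.mp (hQ hq)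
  exact ⟨⟨a, ha⟩, ⟨b, hb⟩, ⟨fun h => hab (congrArg Subtype.val h), hq⟩, rfl⟩

theorem card_edgeFinset_sumGraph [DecidableEq G] [Module (ZMod 2) G] (hm : 4 ≤ m)
    (hΛ : InLambdaFamily m Λ) (hQ : Q ⊆ dDot 2 Λ) : #(sumGraph Λ Q).edgeFinset = #Q := by
  let sum : Sym2 Λ → G := Sym2.lift ⟨fun a b => (a + b : G), fun a b => add_comm (a : G) b⟩
  refine card_nbij sum (fun e => ?_) (fun e he e' _ h => ?_) fun q hq => ?_
  · induction e with
    | _ a b => exact fun he => (SimpleGraph.mem_edgeFinset.mp he).2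
  · induction e with | _ a b
    induction e' with | _ c d
    have hab : (a : G) ≠ b :=
      fun h => (SimpleGraph.mem_edgeFinset.mp he).1 (Subtype.ext h)
    have h' := (hΛ.add_eq_add_iff hm a.2 b.2 c.2 d.2 hab).mp h
    exact Sym2.map.injective Subtype.val_injective h'
  · obtain ⟨a, b, hab, rfl⟩ := exists_sumGraph_adj hQ hq
    exact ⟨s(a, b), SimpleGraph.mem_edgeFinset.mpr hab, rfl⟩

end SumGraph

section SumTuples

variable {G : Type*} [AddCommGroup G] [DecidableEq G] {Q : Finset G} {m : ℕ} {g : G}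

/-- The `m`-tuples of elements of `Q` with sum `g`. -/
def sumTuples (Q : Finset G) (m : ℕ) (g : G) : Finset (Fin m → G) :=
  {v ∈ Fintype.piFinset fun _ => Q | ∑ i, v i = g}

theorem mem_sumTuples {v : Fin m → G} : v ∈ sumTuples Q m g ↔ (∀ i, v i ∈ Q) ∧ ∑ i, v i = g := by
  simp [sumTuples]

theorem addEnergy_le_card_sumTuples [Module (ZMod 2) G] (Q : Finset G) (p : ℕ) :
    _root_.addEnergy p Q ≤ #(sumTuples Q (p + p) 0) := by
  refine card_le_card_of_injOn (Fin.appendEquiv p p) (fun v hv => ?_) (Equiv.injective _).injOn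
  obtain ⟨hvQ, hsum⟩ := mem_filter.mp hv
  simp only [mem_product, Fintype.mem_piFinset] at hvQ
  change Fin.append v.1 v.2 ∈ sumTuples Q (p + p) 0
  refine mem_sumTuples.mpr ⟨fun i => ?_, ?_⟩
  · induction i using Fin.addCases with
    | left i => simpa only [Fin.append_left] using hvQ.1 i
    | right i => simpa only [Fin.append_right] using hvQ.2 i
  · simp only [Fin.sum_univ_add, Fin.append_left, Fin.append_right, hsum, ZModModule.add_self]

theorem card_sumTuples_succ_le {ι : Type*} (s : Finset ι) (j : ι → Fin (m + 1)) (c : ι → G)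
    (h : ∀ v ∈ sumTuples Q (m + 1) g, ∃ i ∈ s, v (j i) = c i) :
    #(sumTuples Q (m + 1) g) ≤ ∑ i ∈ s, #(sumTuples Q m (g - c i)) := by
  classical
  have hcover : sumTuples Q (m + 1) g ⊆
      s.biUnion fun i => (sumTuples Q m (g - c i)).image ((j i).insertNth (c i)) := by
    intro v hv
    obtain ⟨i, hi, hvi⟩ := h v hv
    obtain ⟨hvQ, rfl⟩ := mem_sumTuples.mp hv
    refine mem_biUnion.mpr ⟨i, hi, mem_image.mpr ⟨(j i).removeNth v, ?_, ?_⟩⟩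
    · refine mem_sumTuples.mpr ⟨fun _ => hvQ _, ?_⟩
      rw [Fin.sum_univ_succAbove v (j i), hvi, add_sub_cancel_left]
      rfl
    · rw [← hvi, Fin.insertNth_self_removeNth]
  exact (card_le_card hcover).trans
    (card_biUnion_le.trans (sum_le_sum fun _ _ => card_image_le))

variable [Module (ZMod 2) G] {Λ : Finset G}

theorem exists_adj_apply_eq_of_mem_sumTuples {M : ℕ} (hΛ : InLambdaFamily M Λ)
    (hQ : Q ⊆ dDot 2 Λ) (hm : 2 * m + 2 ≤ M) {a b : Λ} (hab : a ≠ b) {v : Fin m → G}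
    (hv : v ∈ sumTuples Q m (a + b)) : ∃ i c, (sumGraph Λ Q).Adj a c ∧ v i = a + c := by
  obtain ⟨hvQ, hsum⟩ := mem_sumTuples.mp hv
  choose x y hadj hxy using fun i => exists_sumGraph_adj hQ (hvQ i)
  by_contra! hne
  have hx : ∀ i, x i ≠ a := fun i hi => hne i (y i) (hi ▸ hadj i) (hi ▸ (hxy i).symm)
  have hy : ∀ i, y i ≠ a := fun i hi => hne i (x i) (hi ▸ (hadj i).symm)
    (by rw [← hi, ← hxy i, add_comm])
  let s : Multiset G := (a : G) ::ₘ (b : G) ::ₘ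
    (univ.val.map (fun i => (x i : G)) + univ.val.map (fun i => (y i : G)))
  have hsΛ : ∀ z ∈ s, z ∈ Λ := by
    simp only [s, Multiset.mem_cons, Multiset.mem_add, Multiset.mem_map]
    rintro z (rfl | rfl | ⟨i, -, rfl⟩ | ⟨i, -, rfl⟩) <;> exact Subtype.property _
  have hs0 : s.sum = 0 := by
    have hsums : ∑ i, (x i : G) + ∑ i, (y i : G) = a + b := by
      rw [← sum_add_distrib, ← hsum]
      exact sum_congr rfl fun i _ => hxy i
    simp only [s, Multiset.sum_cons, Multiset.sum_add]
    rw [← add_assoc, ← ZModModule.add_self (a + b : G)]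
    exact congrArg _ hsums
  have hcount : s.count (a : G) = 1 := by
    have hab' : (a : G) ≠ b := fun h => hab (Subtype.ext h)
    have hx' : (a : G) ∉ univ.val.map fun i => (x i : G) := by simpa using hx
    have hy' : (a : G) ∉ univ.val.map fun i => (y i : G) := by simpa using hy
    rw [Multiset.count_cons_self, Multiset.count_cons_of_ne hab', Multiset.count_add,
      Multiset.count_eq_zero_of_notMem hx', Multiset.count_eq_zero_of_notMem hy']
  have heven := hΛ.even_count hsΛ (by simp only [s, Multiset.card_cons, Multiset.card_add,
    Multiset.card_map, card_val, card_univ, Fintype.card_fin]; omega) hs0 a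
  simp [hcount] at heven

theorem card_sumTuples_succ_add_le {M : ℕ} (hΛ : InLambdaFamily M Λ) (hQ : Q ⊆ dDot 2 Λ)
    (hm : 2 * (m + 1) + 2 ≤ M) {a b : Λ} (hab : a ≠ b) :
    #(sumTuples Q (m + 1) (a + b)) ≤
      (m + 1) * ∑ c ∈ (sumGraph Λ Q).neighborFinset a, #(sumTuples Q m (c + b)) := by
  calc #(sumTuples Q (m + 1) (a + b))
      ≤ ∑ i ∈ (univ : Finset (Fin (m + 1))) ×ˢ (sumGraph Λ Q).neighborFinset a,
          #(sumTuples Q m (a + b - (a + i.2))) := by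
        refine card_sumTuples_succ_le _ Prod.fst _ fun v hv => ?_
        obtain ⟨i, c, hac, hvi⟩ := exists_adj_apply_eq_of_mem_sumTuples hΛ hQ hm hab hv
        exact ⟨(i, c), by simpa using hac, hvi⟩
    _ = _ := by
        have hsub (c : Λ) : (a + b - (a + c) : G) = c + b := by
          rw [add_sub_add_left_eq_sub, ZModModule.sub_eq_add, add_comm]
        simp only [sum_product, hsub, sum_const, card_univ, Fintype.card_fin, smul_eq_mul]

theorem card_sumTuples_succ_zero_le (hQ : Q ⊆ dDot 2 Λ) :
    #(sumTuples Q (m + 1) 0) ≤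
      ∑ a, ∑ b ∈ (sumGraph Λ Q).neighborFinset a, #(sumTuples Q m (b + a)) := by
  calc #(sumTuples Q (m + 1) 0)
      ≤ ∑ e ∈ univ.sigma fun a => (sumGraph Λ Q).neighborFinset a,
          #(sumTuples Q m (0 - (e.2 + e.1))) := by
        refine card_sumTuples_succ_le _ (fun _ => 0) _ fun v hv => ?_
        obtain ⟨a, b, hab, hv0⟩ := exists_sumGraph_adj hQ ((mem_sumTuples.mp hv).1 0)
        exact ⟨⟨b, a⟩, by simpa using hab.symm, hv0.symm⟩
    _ = _ := by simp [sum_sigma, ZModModule.neg_eq_self]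

end SumTuples

section TraceRecursion

variable {G : Type*} [AddCommGroup G] [DecidableEq G] {Λ Q : Finset G} {m M : ℕ}

/-- The number of `m`-tuples of elements of `Q` with zero sum, divided by `m!`. -/
noncomputable def zeroSumWeight (Q : Finset G) (m : ℕ) : ℝ := #(sumTuples Q m 0) / m.factorial

theorem zeroSumWeight_nonneg (Q : Finset G) (m : ℕ) : 0 ≤ zeroSumWeight Q m := by
  unfold zeroSumWeight
  positivity

theorem zeroSumWeight_zero (Q : Finset G) : zeroSumWeight Q 0 = 1 := by
  simp [zeroSumWeight, sumTuples]

theorem adjMatrix_pow_apply_nonneg {V : Type*} [Fintype V] [DecidableEq V] (H : SimpleGraph V)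
    [DecidableRel H.Adj] (k : ℕ) (a b : V) : 0 ≤ (H.adjMatrix ℝ ^ k) a b := by
  rw [SimpleGraph.adjMatrix_pow_apply_eq_card_walk]
  exact Nat.cast_nonneg _

variable [Module (ZMod 2) G]

theorem card_sumTuples_add_div_factorial_le (hΛ : InLambdaFamily M Λ) (hQ : Q ⊆ dDot 2 Λ)
    (hm : 2 * m + 2 ≤ M) (a b : Λ) :
    (#(sumTuples Q m (a + b)) : ℝ) / m.factorial ≤
      ∑ x ∈ antidiagonal m, zeroSumWeight Q x.1 * ((sumGraph Λ Q).adjMatrix ℝ ^ x.2) a b := by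
  have hterm_nonneg (x : ℕ × ℕ) (a b : Λ) :
      0 ≤ zeroSumWeight Q x.1 * ((sumGraph Λ Q).adjMatrix ℝ ^ x.2) a b :=
    mul_nonneg (zeroSumWeight_nonneg Q x.1) (adjMatrix_pow_apply_nonneg _ x.2 a b)
  induction m generalizing a with
  | zero =>
    rcases eq_or_ne a b with rfl | hab
    · simp [sumTuples, zeroSumWeight_zero, ZModModule.add_self]
    · have hsum : (0 : G) ≠ a + b := by
        rwa [ne_comm, ← ZModModule.sub_eq_add, sub_ne_zero, Subtype.coe_ne_coe]
      simp [sumTuples, hsum, hab]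
  | succ m ih =>
    rcases eq_or_ne a b with rfl | hab
    · have h := single_le_sum (s := antidiagonal (m + 1)) (fun x _ => hterm_nonneg x a a)
        (show (m + 1, 0) ∈ _ by simp)
      simpa [zeroSumWeight, ZModModule.add_self] using h
    have hrec : (#(sumTuples Q (m + 1) (a + b)) : ℝ) ≤
        (m + 1) * ∑ c ∈ (sumGraph Λ Q).neighborFinset a, (#(sumTuples Q m (c + b)) : ℝ) := by
      exact_mod_cast card_sumTuples_succ_add_le hΛ hQ hm hab
    calc (#(sumTuples Q (m + 1) (a + b)) : ℝ) / (m + 1).factorial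
        ≤ ((m + 1) * ∑ c ∈ (sumGraph Λ Q).neighborFinset a, (#(sumTuples Q m (c + b)) : ℝ)) /
            (m + 1).factorial := by gcongr
      _ = ∑ c ∈ (sumGraph Λ Q).neighborFinset a, (#(sumTuples Q m (c + b)) : ℝ) / m.factorial := by
        rw [← sum_div, Nat.factorial_succ, Nat.cast_mul, Nat.cast_succ,
          mul_div_mul_left _ _ (by positivity)]
      _ ≤ ∑ c ∈ (sumGraph Λ Q).neighborFinset a, ∑ x ∈ antidiagonal m,
            zeroSumWeight Q x.1 * ((sumGraph Λ Q).adjMatrix ℝ ^ x.2) c b :=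
        sum_le_sum fun c _ => ih (by omega) c
      _ = ∑ x ∈ antidiagonal m,
            zeroSumWeight Q x.1 * ((sumGraph Λ Q).adjMatrix ℝ ^ (x.2 + 1)) a b := by
        rw [sum_comm]
        simp only [pow_succ', SimpleGraph.adjMatrix_mul_apply, mul_sum]
      _ ≤ _ := by
        rw [Nat.sum_antidiagonal_succ']
        exact le_add_of_nonneg_left (hterm_nonneg (m + 1, 0) a b)

theorem succ_mul_zeroSumWeight_succ_le (hΛ : InLambdaFamily M Λ) (hQ : Q ⊆ dDot 2 Λ)
    (hm : 2 * m + 2 ≤ M) :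
    (m + 1) * zeroSumWeight Q (m + 1) ≤ ∑ x ∈ antidiagonal m,
      zeroSumWeight Q x.1 * ((sumGraph Λ Q).adjMatrix ℝ ^ (x.2 + 1)).trace := by
  have hrec : (#(sumTuples Q (m + 1) 0) : ℝ) ≤
      ∑ a, ∑ b ∈ (sumGraph Λ Q).neighborFinset a, (#(sumTuples Q m (b + a)) : ℝ) := by
    exact_mod_cast card_sumTuples_succ_zero_le hQ
  calc (m + 1) * zeroSumWeight Q (m + 1)
      = #(sumTuples Q (m + 1) 0) / m.factorial := by
        rw [zeroSumWeight, Nat.factorial_succ, Nat.cast_mul, Nat.cast_succ, ← mul_div_assoc,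
          mul_div_mul_left _ _ (by positivity)]
    _ ≤ (∑ a, ∑ b ∈ (sumGraph Λ Q).neighborFinset a, (#(sumTuples Q m (b + a)) : ℝ)) /
          m.factorial := by gcongr
    _ = ∑ a, ∑ b ∈ (sumGraph Λ Q).neighborFinset a,
          (#(sumTuples Q m (b + a)) : ℝ) / m.factorial := by simp only [sum_div]
    _ ≤ ∑ a, ∑ b ∈ (sumGraph Λ Q).neighborFinset a, ∑ x ∈ antidiagonal m,
          zeroSumWeight Q x.1 * ((sumGraph Λ Q).adjMatrix ℝ ^ x.2) b a :=
      sum_le_sum fun a _ => sum_le_sum fun b _ =>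
        card_sumTuples_add_div_factorial_le hΛ hQ hm b a
    _ = ∑ a, ∑ x ∈ antidiagonal m,
          zeroSumWeight Q x.1 * ((sumGraph Λ Q).adjMatrix ℝ ^ (x.2 + 1)) a a :=
      sum_congr rfl fun a _ => by
        rw [sum_comm]
        simp only [pow_succ', SimpleGraph.adjMatrix_mul_apply, mul_sum]
    _ = _ := by
      rw [sum_comm]
      simp only [Matrix.trace, Matrix.diag_apply, mul_sum]

end TraceRecursion

section TracePowers

variable {n : Type*} [Fintype n] [DecidableEq n] {A : Matrix n n ℝ}

theorem trace_pow_eq_sum_eigenvalues_pow (hA : A.IsHermitian) (k : ℕ) :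
    (A ^ k).trace = ∑ i, hA.eigenvalues i ^ k := by
  conv_lhs => rw [hA.spectral_theorem, ← map_pow, Matrix.diagonal_pow]
  rw [Unitary.conjStarAlgAut_apply, Matrix.trace_mul_cycle, Unitary.coe_star_mul_self, one_mul,
    Matrix.trace_diagonal]
  simp

theorem trace_pow_le_mul_pow (hA : A.IsHermitian) (htr : A.trace = 0) {ρ c : ℝ} (hρ : 0 ≤ ρ)
    (hc : 0 ≤ c) (h2 : (A ^ 2).trace ≤ c * ρ ^ 2) (h4 : (A ^ 4).trace ≤ ρ ^ 4) (k : ℕ) :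
    (A ^ (k + 1)).trace ≤ c * ρ ^ (k + 1) := by
  rw [trace_pow_eq_sum_eigenvalues_pow hA] at h2 h4
  have heig (i : n) : |hA.eigenvalues i| ≤ ρ := by
    rw [← pow_le_pow_iff_left₀ (abs_nonneg _) hρ four_ne_zero, Even.pow_abs (by decide)]
    exact (single_le_sum (fun j _ => Even.pow_nonneg (by decide) (hA.eigenvalues j))
      (mem_univ i)).trans h4
  rcases k with _ | k
  · simpa [htr] using mul_nonneg hc hρ
  calc (A ^ (k + 2)).trace = ∑ i, hA.eigenvalues i ^ k * hA.eigenvalues i ^ 2 := by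
        rw [trace_pow_eq_sum_eigenvalues_pow hA]
        simp only [pow_add]
    _ ≤ ∑ i, ρ ^ k * hA.eigenvalues i ^ 2 := by
        refine sum_le_sum fun i _ => mul_le_mul_of_nonneg_right ?_ (sq_nonneg _)
        exact (le_abs_self _).trans
          ((abs_pow _ k).trans_le (pow_le_pow_left₀ (abs_nonneg _) (heig i) k))
    _ ≤ ρ ^ k * (c * ρ ^ 2) := by
        rw [← mul_sum]
        gcongr
    _ = c * ρ ^ (k + 2) := by ring

theorem trace_pow_two_mul_le (hA : A.IsHermitian) {k : ℕ} (hk : k ≠ 0) :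
    (A ^ (2 * k)).trace ≤ (A ^ 2).trace ^ k := by
  obtain ⟨k, rfl⟩ := Nat.exists_eq_add_one_of_ne_zero hk
  rw [trace_pow_eq_sum_eigenvalues_pow hA, trace_pow_eq_sum_eigenvalues_pow hA, pow_succ, mul_sum]
  refine sum_le_sum fun i hi => ?_
  rw [pow_mul, pow_succ]
  refine mul_le_mul_of_nonneg_right (pow_le_pow_left₀ (sq_nonneg _) ?_ k) (sq_nonneg _)
  exact single_le_sum (fun j _ => sq_nonneg (hA.eigenvalues j)) hi

end TracePowers

section NewtonRecursion

theorem succ_mul_choose_add (m s : ℕ) :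
    (m + 1) * (m + 1 + s).choose s = (s + 1) * ∑ i ∈ range (m + 1), (i + s).choose s := by
  have h := Nat.choose_succ_right_eq (m + 1 + s) s
  rw [Nat.add_sub_cancel] at h
  rw [Nat.sum_range_add_choose, mul_comm, ← h, mul_comm, add_right_comm]

theorem le_choose_mul_pow_of_succ_mul_le {w t : ℕ → ℝ} {M s : ℕ} {ρ : ℝ} (hρ : 0 ≤ ρ)
    (hw : ∀ m, 0 ≤ w m) (hw0 : w 0 ≤ 1) (ht : ∀ k, t k ≤ s * ρ ^ (k + 1))
    (hrec : ∀ m < M, (m + 1) * w (m + 1) ≤ ∑ x ∈ antidiagonal m, w x.1 * t x.2)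
    {m : ℕ} (hm : m ≤ M) : w m ≤ (m + s).choose s * ρ ^ m := by
  induction m using Nat.strong_induction_on with
  | _ m ih =>
  rcases m with _ | m
  · simpa using hw0
  refine le_of_mul_le_mul_left (a := (m + 1 : ℝ)) ?_ (by positivity)
  calc (m + 1) * w (m + 1) ≤ ∑ x ∈ antidiagonal m, w x.1 * t x.2 := hrec m hm
    _ ≤ ∑ x ∈ antidiagonal m, ((x.1 + s).choose s * ρ ^ x.1) * (s * ρ ^ (x.2 + 1)) := by
      refine sum_le_sum fun x hx => ?_
      have hxm : x.1 + x.2 = m := mem_antidiagonal.mp hx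
      exact (mul_le_mul_of_nonneg_left (ht _) (hw _)).trans
        (mul_le_mul_of_nonneg_right (ih x.1 (by omega) (by omega)) (by positivity))
    _ = ∑ x ∈ antidiagonal m, s * ρ ^ (m + 1) * ((x.1 + s).choose s : ℝ) := by
      refine sum_congr rfl fun x hx => ?_
      rw [← mem_antidiagonal.mp hx]
      ring
    _ = s * ρ ^ (m + 1) * ∑ i ∈ range (m + 1), ((i + s).choose s : ℝ) := by
      rw [← mul_sum, Nat.sum_antidiagonal_eq_sum_range_succ_mk]
    _ ≤ (s + 1) * ρ ^ (m + 1) * ∑ i ∈ range (m + 1), ((i + s).choose s : ℝ) := by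
      gcongr
      exact le_add_of_nonneg_right zero_le_one
    _ = (m + 1) * ((m + 1 + s).choose s * ρ ^ (m + 1)) := by
      have h : ((m + 1) * (m + 1 + s).choose s : ℝ) =
          (s + 1) * ∑ i ∈ range (m + 1), ((i + s).choose s : ℝ) := by
        exact_mod_cast succ_mul_choose_add m s
      rw [← mul_assoc, h]
      ring

end NewtonRecursion

section Numerics

theorem factorial_le_exp_mul_sqrt_mul_pow {n : ℕ} (hn : n ≠ 0) :
    (n.factorial : ℝ) ≤ Real.exp 1 * √n * (n / Real.exp 1) ^ n := by
  obtain ⟨k, rfl⟩ := Nat.exists_eq_succ_of_ne_zero hn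
  have h : Stirling.stirlingSeq k.succ ≤ Real.exp 1 / √2 := by
    simpa [Stirling.stirlingSeq_one] using Stirling.stirlingSeq'_antitone (Nat.zero_le k)
  rw [Stirling.stirlingSeq, div_le_iff₀ (by positivity), Real.sqrt_mul zero_le_two] at h
  refine h.trans_eq ?_
  field_simp

theorem choose_mul_pow_le_exp (n k : ℕ) {x : ℝ} (hx : 0 ≤ x) :
    n.choose k * x ^ k ≤ Real.exp (n * x) := by
  rcases lt_or_ge n k with hk | hk
  · simpa [Nat.choose_eq_zero_of_lt hk] using Real.exp_nonneg _
  calc (n.choose k : ℝ) * x ^ k ≤ ∑ i ∈ range (n + 1), x ^ i * 1 ^ (n - i) * n.choose i := by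
        rw [mul_comm]
        simpa using single_le_sum (f := fun i => x ^ i * (n.choose i : ℝ))
          (fun i _ => by positivity) (mem_range_succ_iff.mpr hk)
    _ = (x + 1) ^ n := (add_pow x 1 n).symm
    _ ≤ Real.exp x ^ n := by
        gcongr
        exact Real.add_one_le_exp x
    _ = Real.exp (n * x) := (Real.exp_nat_mul x n).symm

theorem exp_one_mul_sqrt_le_exp {x : ℝ} (hx : 100 ≤ x) : Real.exp 1 * √x ≤ Real.exp (x / 10) := by
  have hsqrt : √x ≤ x / 10 := by
    rw [Real.sqrt_le_left (by positivity)]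
    nlinarith
  calc Real.exp 1 * √x ≤ Real.exp 1 * Real.exp (x / 10 - 1) := by
        gcongr
        linarith [Real.add_one_le_exp (x / 10 - 1)]
    _ = Real.exp (x / 10) := by rw [← Real.exp_add, add_sub_cancel]

theorem exp_mul_two_div_exp_pow_lt_one {p s : ℕ} (hp : p ≠ 0) (hs : 64 * s ≤ 3 * p) :
    Real.exp ((p + p : ℕ) / 10) * (2 / Real.exp 1) ^ (p + p) *
      (8 ^ s * Real.exp ((p + p + s : ℕ) * (1 / 8))) < 1 := by
  have hp0 : (0 : ℝ) < p := by positivity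
  have hs' : 64 * (s : ℝ) ≤ 3 * p := by exact_mod_cast hs
  have hlog8 : Real.log 8 = 3 * Real.log 2 := by
    rw [show (8 : ℝ) = 2 ^ 3 by norm_num, Real.log_pow, Nat.cast_ofNat]
  calc Real.exp ((p + p : ℕ) / 10) * (2 / Real.exp 1) ^ (p + p) *
        (8 ^ s * Real.exp ((p + p + s : ℕ) * (1 / 8)))
      = Real.exp ((p + p : ℕ) / 10) * (Real.exp (Real.log 2) / Real.exp 1) ^ (p + p) *
        (Real.exp (Real.log 8) ^ s * Real.exp ((p + p + s : ℕ) * (1 / 8))) := by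
        rw [Real.exp_log two_pos, Real.exp_log (by norm_num)]
    _ = Real.exp ((p + p : ℕ) / 10 + (p + p : ℕ) * (Real.log 2 - 1) +
        (s * (3 * Real.log 2) + (p + p + s : ℕ) * (1 / 8))) := by
        simp only [Real.exp_add, Real.exp_nat_mul, Real.exp_sub, hlog8]
    _ < 1 := by
        rw [Real.exp_lt_one_iff]
        push_cast
        nlinarith [Real.log_two_lt_d9]

theorem factorial_mul_choose_lt_pow {p s : ℕ} (hp : 64 ≤ p) (hs : 64 * s ≤ 3 * p) :
    ((p + p).factorial * (p + p + s).choose s : ℝ) < p ^ (p + p) := by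
  have hp100 : (100 : ℝ) ≤ (p + p : ℕ) := by exact_mod_cast (by omega : 100 ≤ p + p)
  have hchoose : ((p + p + s).choose s : ℝ) ≤ 8 ^ s * Real.exp ((p + p + s : ℕ) * (1 / 8)) := by
    have h := choose_mul_pow_le_exp (p + p + s) s (x := 1 / 8) (by norm_num)
    rwa [one_div_pow, mul_one_div, div_le_iff₀' (by positivity)] at h
  calc ((p + p).factorial * (p + p + s).choose s : ℝ)
      ≤ (Real.exp ((p + p : ℕ) / 10) * ((p + p : ℕ) / Real.exp 1) ^ (p + p)) *
          (8 ^ s * Real.exp ((p + p + s : ℕ) * (1 / 8))) := by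
        gcongr
        refine (factorial_le_exp_mul_sqrt_mul_pow (by omega)).trans ?_
        gcongr
        exact exp_one_mul_sqrt_le_exp hp100
    _ = p ^ (p + p) * (Real.exp ((p + p : ℕ) / 10) * (2 / Real.exp 1) ^ (p + p) *
          (8 ^ s * Real.exp ((p + p + s : ℕ) * (1 / 8)))) := by
        have h : ((p + p : ℕ) / Real.exp 1 : ℝ) = p * (2 / Real.exp 1) := by push_cast; ring
        rw [h, mul_pow]
        ring
    _ < p ^ (p + p) := mul_lt_of_lt_one_right
        (by positivity) (exp_mul_two_div_exp_pow_lt_one (by omega) hs)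

end Numerics

section Cut

variable {V : Type*} [DecidableEq V]

theorem card_powerset_le_four_mul_card_separating {W : Finset V} {x y : V} (hx : x ∈ W)
    (hy : y ∈ W) (hxy : x ≠ y) : 2 ^ #W ≤ 4 * #{U ∈ W.powerset | x ∈ U ∧ y ∉ U} := by
  have hcard : #(Icc {x} (W.erase y)) = 2 ^ (#W - 2) := by
    rw [card_Icc_finset (by simp [hx, hxy]), card_erase_of_mem hy, card_singleton, Nat.sub_sub]
  have hW : 2 ≤ #W := by
    rw [← card_pair hxy]
    exact card_le_card (by simp [insert_subset_iff, hx, hy])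
  have hsub : Icc {x} (W.erase y) ⊆ {U ∈ W.powerset | x ∈ U ∧ y ∉ U} := fun U hU => by
    simp only [mem_Icc, singleton_subset_iff, subset_erase] at hU
    exact mem_filter.mpr ⟨mem_powerset.mpr hU.2.1, hU.1, hU.2.2⟩
  calc 2 ^ #W = 4 * 2 ^ (#W - 2) := by rw [← pow_sub_mul_pow 2 hW]; ring
    _ ≤ _ := by rw [← hcard]; exact Nat.mul_le_mul_left 4 (card_le_card hsub)

theorem exists_card_le_four_mul_card_cut {W : Finset V} {E : Finset (V × V)} (hE : E ⊆ W.offDiag) :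
    ∃ U : Finset V, #E ≤ 4 * #{e ∈ E | e.1 ∈ U ∧ e.2 ∉ U} := by
  have hsum : ∑ _U ∈ W.powerset, #E ≤ ∑ U ∈ W.powerset, 4 * #{e ∈ E | e.1 ∈ U ∧ e.2 ∉ U} := by
    calc ∑ _U ∈ W.powerset, #E = ∑ _e ∈ E, 2 ^ #W := by
          simp only [sum_const, card_powerset, smul_eq_mul, mul_comm]
      _ ≤ ∑ e ∈ E, 4 * #{U ∈ W.powerset | e.1 ∈ U ∧ e.2 ∉ U} := sum_le_sum fun e he => by
          obtain ⟨h₁, h₂, hne⟩ := mem_offDiag.mp (hE he)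
          exact card_powerset_le_four_mul_card_separating h₁ h₂ hne
      _ = ∑ U ∈ W.powerset, 4 * #{e ∈ E | e.1 ∈ U ∧ e.2 ∉ U} := by
          rw [← mul_sum, ← mul_sum]
          exact congrArg _ (sum_card_bipartiteAbove_eq_sum_card_bipartiteBelow _)
  obtain ⟨U, -, hU⟩ := exists_le_of_sum_le (powerset_nonempty W) hsum
  exact ⟨U, hU⟩

end Cut

section DensePair

variable {V : Type*} [Fintype V] (H : SimpleGraph V) [DecidableRel H.Adj]

theorem sum_adjMatrix_apply : ∑ e : V × V, H.adjMatrix ℝ e.1 e.2 = 2 * #H.edgeFinset := by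
  rw [Fintype.sum_prod_type]
  calc ∑ a, ∑ b, H.adjMatrix ℝ a b = ∑ a, (H.degree a : ℝ) := by
        simp only [SimpleGraph.adjMatrix_apply, SimpleGraph.degree_eq_sum_if_adj]
    _ = 2 * #H.edgeFinset := by exact_mod_cast H.sum_degrees_eq_twice_card_edges

theorem mul_card_lt_degree_mul_degree_le (T : ℝ) :
    T * #{e : V × V | T < H.degree e.1 * H.degree e.2} ≤ (2 * #H.edgeFinset) ^ 2 := by
  calc T * #{e : V × V | T < H.degree e.1 * H.degree e.2}
      = ∑ e : V × V with T < H.degree e.1 * H.degree e.2, T := by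
        rw [sum_const, nsmul_eq_mul, mul_comm]
    _ ≤ ∑ e : V × V with T < H.degree e.1 * H.degree e.2, (H.degree e.1 * H.degree e.2 : ℝ) :=
        sum_le_sum fun e he => (mem_filter.mp he).2.le
    _ ≤ ∑ e : V × V, (H.degree e.1 * H.degree e.2 : ℝ) :=
        sum_le_univ_sum_of_nonneg fun e => by positivity
    _ = (∑ a, H.degree a : ℝ) * ∑ b, (H.degree b : ℝ) := by
        rw [Fintype.sum_mul_sum, Fintype.sum_prod_type]
    _ = (2 * #H.edgeFinset) ^ 2 := by
        rw [← pow_two]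
        exact_mod_cast congrArg (· ^ 2) H.sum_degrees_eq_twice_card_edges

variable [DecidableEq V]

theorem trace_adjMatrix_sq : (H.adjMatrix ℝ ^ 2).trace = 2 * #H.edgeFinset := by
  simp only [Matrix.trace, Matrix.diag_apply, pow_two, SimpleGraph.adjMatrix_mul_self_apply_self]
  exact_mod_cast H.sum_degrees_eq_twice_card_edges

theorem sum_adjMatrix_pow_apply_sq (k : ℕ) :
    ∑ e : V × V, (H.adjMatrix ℝ ^ k) e.1 e.2 ^ 2 = (H.adjMatrix ℝ ^ (2 * k)).trace := by
  have hsymm : (H.adjMatrix ℝ ^ k).IsSymm := (SimpleGraph.isSymm_adjMatrix (α := ℝ) H).pow k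
  rw [Fintype.sum_prod_type, two_mul, pow_add, Matrix.trace]
  refine sum_congr rfl fun a _ => ?_
  rw [Matrix.diag_apply, Matrix.mul_apply]
  exact sum_congr rfl fun b _ => by rw [hsymm.apply a b, pow_two]

theorem sum_adjMatrix_pow_three_sq_le (P : Finset (V × V)) :
    (∑ e ∈ P, (H.adjMatrix ℝ ^ 3) e.1 e.2) ^ 2 ≤ #P * (2 * #H.edgeFinset) ^ 3 := by
  have hA : (H.adjMatrix ℝ).IsHermitian := SimpleGraph.isSymm_adjMatrix _
  calc (∑ e ∈ P, (H.adjMatrix ℝ ^ 3) e.1 e.2) ^ 2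
      ≤ #P * ∑ e ∈ P, (H.adjMatrix ℝ ^ 3) e.1 e.2 ^ 2 := sq_sum_le_card_mul_sum_sq
    _ ≤ #P * ∑ e : V × V, (H.adjMatrix ℝ ^ 3) e.1 e.2 ^ 2 := by
        gcongr
        exact P.subset_univ
    _ ≤ #P * (2 * #H.edgeFinset) ^ 3 := by
        rw [sum_adjMatrix_pow_apply_sq, ← trace_adjMatrix_sq]
        gcongr
        exact trace_pow_two_mul_le hA three_ne_zero

theorem mul_sum_adjMatrix_pow_three_sq_le {T : ℝ} (hT : 0 ≤ T) :
    T * (∑ e : V × V with T < H.degree e.1 * H.degree e.2,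
      (H.adjMatrix ℝ ^ 3) e.1 e.2) ^ 2 ≤ (2 * #H.edgeFinset) ^ 5 := by
  calc _ ≤ T * (#{e : V × V | T < H.degree e.1 * H.degree e.2} * (2 * #H.edgeFinset) ^ 3) := by
        gcongr
        exact sum_adjMatrix_pow_three_sq_le H _
    _ = T * #{e : V × V | T < H.degree e.1 * H.degree e.2} * (2 * #H.edgeFinset) ^ 3 :=
        (mul_assoc _ _ _).symm
    _ ≤ (2 * #H.edgeFinset) ^ 2 * (2 * #H.edgeFinset) ^ 3 := by
        gcongr
        exact mul_card_lt_degree_mul_degree_le H T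
    _ = (2 * #H.edgeFinset) ^ 5 := by ring

theorem trace_adjMatrix_pow_four_eq_sum :
    (H.adjMatrix ℝ ^ 4).trace =
      ∑ e : V × V, H.adjMatrix ℝ e.1 e.2 * (H.adjMatrix ℝ ^ 3) e.1 e.2 := by
  have hsymm : (H.adjMatrix ℝ ^ 3).IsSymm := (SimpleGraph.isSymm_adjMatrix (α := ℝ) H).pow 3
  rw [Fintype.sum_prod_type, pow_succ', Matrix.trace]
  refine sum_congr rfl fun a _ => ?_
  rw [Matrix.diag_apply, Matrix.mul_apply]
  exact sum_congr rfl fun b _ => by rw [hsymm.apply a b]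

theorem adjMatrix_pow_three_apply (a b : V) :
    (H.adjMatrix ℝ ^ 3) a b = #(H.interedges (H.neighborFinset a) (H.neighborFinset b)) := by
  rw [pow_succ', pow_two, SimpleGraph.adjMatrix_mul_apply, SimpleGraph.interedges, Rel.interedges,
    card_filter, sum_product]
  push_cast
  refine sum_congr rfl fun x _ => ?_
  rw [SimpleGraph.mul_adjMatrix_apply]
  simp only [SimpleGraph.adjMatrix_apply]

variable {H}

theorem card_edgeFinset_pos_of_trace_pow_four_pos (hH : 0 < (H.adjMatrix ℝ ^ 4).trace) :
    (0 : ℝ) < #H.edgeFinset := by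
  have hA : (H.adjMatrix ℝ).IsHermitian := SimpleGraph.isSymm_adjMatrix _
  have h := hH.trans_le (trace_pow_two_mul_le hA two_ne_zero)
  rw [trace_adjMatrix_sq] at h
  exact Nat.cast_pos.mpr (Nat.pos_of_ne_zero fun h0 => by simp [h0] at h)

theorem sum_adjMatrix_pow_three_lt {τ : ℝ} (hτ : 0 < τ) (hm : (0 : ℝ) < #H.edgeFinset) :
    ∑ e : V × V with 2 ^ 10 * #H.edgeFinset ^ 5 / τ ^ 2 < H.degree e.1 * H.degree e.2,
      (H.adjMatrix ℝ ^ 3) e.1 e.2 < τ / 4 := by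
  set T : ℝ := 2 ^ 10 * #H.edgeFinset ^ 5 / τ ^ 2
  have hT : 0 < T := by positivity
  have h := mul_sum_adjMatrix_pow_three_sq_le H hT.le
  rw [← le_div_iff₀' hT] at h
  refine lt_of_pow_lt_pow_left₀ 2 (by positivity) (h.trans_lt ?_)
  calc (2 * #H.edgeFinset : ℝ) ^ 5 / T = τ ^ 2 / 32 := by
        simp only [T]
        field_simp
        norm_num
    _ < (τ / 4) ^ 2 := by nlinarith [pow_pos hτ 2]

theorem exists_degree_mul_degree_le {τ : ℝ} (hτ0 : 0 < τ) (hτ : τ ≤ (H.adjMatrix ℝ ^ 4).trace) :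
    ∃ a b, H.degree a * H.degree b * τ ^ 2 ≤ 2 ^ 10 * #H.edgeFinset ^ 5 ∧
      3 * τ ≤ 8 * #H.edgeFinset * (H.adjMatrix ℝ ^ 3) a b := by
  by_contra! hsmall
  set m : ℝ := (#H.edgeFinset : ℝ)
  set T := 2 ^ 10 * m ^ 5 / τ ^ 2
  set W := fun e : V × V => (H.adjMatrix ℝ ^ 3) e.1 e.2
  have hm0 : 0 < m := card_edgeFinset_pos_of_trace_pow_four_pos (hτ0.trans_le hτ)
  have hgood (e : V × V) : H.adjMatrix ℝ e.1 e.2 * W e ≤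
      H.adjMatrix ℝ e.1 e.2 * (3 * τ / (8 * m)) +
        if T < H.degree e.1 * H.degree e.2 then W e else 0 := by
    have hW0 : 0 ≤ W e := adjMatrix_pow_apply_nonneg H 3 e.1 e.2
    have hA0 : 0 ≤ H.adjMatrix ℝ e.1 e.2 := by
      simpa only [pow_one] using adjMatrix_pow_apply_nonneg H 1 e.1 e.2
    have hA1 : H.adjMatrix ℝ e.1 e.2 ≤ 1 := by
      rw [SimpleGraph.adjMatrix_apply]
      split_ifs <;> norm_num
    split_ifs with hT
    · exact (mul_le_of_le_one_left hW0 hA1).trans (le_add_of_nonneg_left (by positivity))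
    · rw [add_zero]
      gcongr
      rw [le_div_iff₀' (by positivity)]
      exact (hsmall _ _ ((le_div_iff₀ (by positivity)).mp (not_lt.mp hT))).le
  refine hτ.not_gt ?_
  calc (H.adjMatrix ℝ ^ 4).trace = ∑ e : V × V, H.adjMatrix ℝ e.1 e.2 * W e :=
        trace_adjMatrix_pow_four_eq_sum H
    _ ≤ ∑ e : V × V, H.adjMatrix ℝ e.1 e.2 * (3 * τ / (8 * m)) +
        ∑ e : V × V with T < H.degree e.1 * H.degree e.2, W e := by
        rw [sum_filter, ← sum_add_distrib]
        exact sum_le_sum fun e _ => hgood e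
    _ < 2 * m * (3 * τ / (8 * m)) + τ / 4 := by
        rw [← sum_mul, sum_adjMatrix_apply]
        gcongr
        exact sum_adjMatrix_pow_three_lt hτ0 hm0
    _ = τ := by
        field_simp
        ring

theorem exists_disjoint_le_card_interedges {τ : ℝ} (hτ0 : 0 < τ)
    (hτ : τ ≤ (H.adjMatrix ℝ ^ 4).trace) :
    ∃ A B : Finset V, Disjoint A B ∧ #A * #B * τ ^ 2 ≤ 2 ^ 10 * #H.edgeFinset ^ 5 ∧
      3 * τ ≤ 32 * #H.edgeFinset * #(H.interedges A B) := by
  obtain ⟨a, b, hdeg, hpaths⟩ := exists_degree_mul_degree_le hτ0 hτ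
  rw [adjMatrix_pow_three_apply] at hpaths
  have hne : H.interedges (H.neighborFinset a) (H.neighborFinset b) ⊆ univ.offDiag := fun e he =>
    mem_offDiag.mpr ⟨mem_univ _, mem_univ _, (Rel.mem_interedges_iff.mp he).2.2.ne⟩
  obtain ⟨U, hU⟩ := exists_card_le_four_mul_card_cut hne
  have hcut : {e ∈ H.interedges (H.neighborFinset a) (H.neighborFinset b) | e.1 ∈ U ∧ e.2 ∉ U} ⊆
      H.interedges (H.neighborFinset a ∩ U) (H.neighborFinset b \ U) := fun e he => by
    obtain ⟨he, h₁, h₂⟩ := mem_filter.mp he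
    obtain ⟨ha, hb, hadj⟩ := Rel.mem_interedges_iff.mp he
    exact Rel.mem_interedges_iff.mpr
      ⟨mem_inter.mpr ⟨ha, h₁⟩, mem_sdiff.mpr ⟨hb, h₂⟩, hadj⟩
  refine ⟨H.neighborFinset a ∩ U, H.neighborFinset b \ U,
    disjoint_sdiff.mono_left inter_subset_right, hdeg.trans' ?_, hpaths.trans ?_⟩
  · rw [← H.card_neighborFinset_eq_degree, ← H.card_neighborFinset_eq_degree]
    gcongr
    · exact inter_subset_left
    · exact sdiff_subset
  · have h := hU.trans (Nat.mul_le_mul_left 4 (card_le_card hcut))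
    calc (8 * #H.edgeFinset * #(H.interedges (H.neighborFinset a) (H.neighborFinset b)) : ℝ)
        ≤ 8 * #H.edgeFinset * (4 * #(H.interedges (H.neighborFinset a ∩ U)
            (H.neighborFinset b \ U))) := by
          gcongr
          exact_mod_cast h
      _ = _ := by ring

end DensePair

section Energy

variable {G : Type*} [AddCommGroup G] [DecidableEq G] [Module (ZMod 2) G] {Λ Q : Finset G}

theorem le_trace_adjMatrix_sumGraph_pow_four {p : ℕ} {K : ℝ} (hK : 1 ≤ K) (hp : 64 * K ≤ p)
    (hΛ : InLambdaFamily (4 * p) Λ) (hQ : Q ⊆ dDot 2 Λ) (hQ0 : Q.Nonempty)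
    (hE : p ^ (2 * p) * #Q ^ p / K ^ p ≤ (_root_.addEnergy p Q : ℝ)) :
    #Q ^ 2 / K ^ 2 ≤ ((sumGraph Λ Q).adjMatrix ℝ ^ 4).trace := by
  by_contra! hlt
  have hp64 : 64 ≤ p := by exact_mod_cast (by linarith : (64 : ℝ) ≤ p)
  set s := ⌈2 * K⌉₊
  have hs : 64 * s ≤ 3 * p := by
    have h : (s : ℝ) < 2 * K + 1 := Nat.ceil_lt_add_one (by positivity)
    exact_mod_cast (by linarith : (64 * s : ℝ) ≤ 3 * p)
  set ρ := √(#Q / K)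
  have hρ0 : 0 < ρ := Real.sqrt_pos.mpr (div_pos (Nat.cast_pos.mpr hQ0.card_pos) (by positivity))
  have hρ2 : ρ ^ 2 = #Q / K := Real.sq_sqrt (by positivity)
  have htrace : ∀ k, ((sumGraph Λ Q).adjMatrix ℝ ^ (k + 1)).trace ≤ s * ρ ^ (k + 1) := by
    have hA : ((sumGraph Λ Q).adjMatrix ℝ).IsHermitian := SimpleGraph.isSymm_adjMatrix _
    refine trace_pow_le_mul_pow hA (SimpleGraph.trace_adjMatrix ℝ _) (Real.sqrt_nonneg _)
      s.cast_nonneg ?_ ?_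
    · rw [trace_adjMatrix_sq, card_edgeFinset_sumGraph (by omega) hΛ hQ, hρ2, mul_div_assoc',
        le_div_iff₀ (by positivity)]
      nlinarith [Nat.le_ceil (2 * K)]
    · rw [pow_mul ρ 2 2, hρ2, div_pow]
      exact hlt.le
  have hweight : zeroSumWeight Q (p + p) ≤ (p + p + s).choose s * ρ ^ (p + p) :=
    le_choose_mul_pow_of_succ_mul_le (Real.sqrt_nonneg _) (zeroSumWeight_nonneg Q)
      (zeroSumWeight_zero Q).le htrace
      (fun m hm => succ_mul_zeroSumWeight_succ_le hΛ hQ (by omega)) le_rfl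
  refine hE.not_gt ?_
  calc (_root_.addEnergy p Q : ℝ) ≤ #(sumTuples Q (p + p) 0) := by
        exact_mod_cast addEnergy_le_card_sumTuples Q p
    _ = (p + p).factorial * zeroSumWeight Q (p + p) := by
        rw [zeroSumWeight, mul_div_cancel₀ _ (by positivity)]
    _ ≤ (p + p).factorial * ((p + p + s).choose s * ρ ^ (p + p)) := by gcongr
    _ < p ^ (p + p) * ρ ^ (p + p) := by
        rw [← mul_assoc]
        exact mul_lt_mul_of_pos_right (factorial_mul_choose_lt_pow hp64 hs) (pow_pos hρ0 _)
    _ = p ^ (2 * p) * #Q ^ p / K ^ p := by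
        rw [← two_mul, pow_mul ρ, hρ2, div_pow, mul_div_assoc]

end Energy

section KovariSosTuran

theorem choose_mul_pow_le_choose {n d s : ℕ} {δ : ℝ} (hδ : 0 ≤ δ) (hd : δ / 2 * n ≤ d)
    (hs : 4 * s ≤ δ * n) : n.choose s * (δ / 4) ^ s ≤ (d.choose s : ℝ) := by
  have hsd : s ≤ d := by
    exact_mod_cast (by linarith [s.cast_nonneg (α := ℝ)] : (s : ℝ) ≤ d)
  have hdesc : (n.descFactorial s : ℝ) * (δ / 4) ^ s ≤ d.descFactorial s :=
    calc (n.descFactorial s : ℝ) * (δ / 4) ^ s ≤ n ^ s * (δ / 4) ^ s := by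
          gcongr
          exact_mod_cast Nat.descFactorial_le_pow n s
      _ = (n * (δ / 4)) ^ s := (mul_pow _ _ _).symm
      _ ≤ (d + 1 - s : ℕ) ^ s := by
          gcongr
          rw [Nat.cast_sub (hsd.trans d.le_succ)]
          push_cast
          linarith
      _ ≤ d.descFactorial s := by exact_mod_cast Nat.pow_sub_le_descFactorial d s
  rw [Nat.descFactorial_eq_factorial_mul_choose, Nat.descFactorial_eq_factorial_mul_choose] at hdesc
  push_cast at hdesc
  rw [mul_assoc] at hdesc
  exact le_of_mul_le_mul_left hdesc (by positivity)

variable {α β : Type*} {r : α → β → Prop} [∀ a, DecidablePred (r a)] {A : Finset α} {B : Finset β}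
  {δ : ℝ}

theorem mul_card_le_card_rich_columns (hA : A.Nonempty) (hδ : 0 ≤ δ)
    (hdens : δ * #A * #B ≤ #(Rel.interedges r A B)) :
    δ / 2 * #B ≤ #{b ∈ B | δ / 2 * #A ≤ #(A.bipartiteBelow r b)} := by
  set B' := {b ∈ B | δ / 2 * #A ≤ #(A.bipartiteBelow r b)}
  have hcol (b : β) :
      (#(A.bipartiteBelow r b) : ℝ) ≤
        δ / 2 * #A + if δ / 2 * #A ≤ #(A.bipartiteBelow r b) then (#A : ℝ) else 0 := by
    split_ifs with hb
    · have h : (#(A.bipartiteBelow r b) : ℝ) ≤ #A := by exact_mod_cast card_filter_le _ _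
      exact h.trans (le_add_of_nonneg_left (by positivity))
    · rw [add_zero]
      exact (not_le.mp hb).le
  have hsum : δ * #A * #B ≤ #B * (δ / 2 * #A) + #B' * #A :=
    calc δ * #A * #B ≤ #(Rel.interedges r A B) := hdens
      _ = ∑ b ∈ B, (#(A.bipartiteBelow r b) : ℝ) := by
          rw [Rel.interedges, card_filter, sum_product_right]
          simp only [bipartiteBelow, card_filter, Nat.cast_sum]
      _ ≤ ∑ b ∈ B, (δ / 2 * #A +
            if δ / 2 * #A ≤ #(A.bipartiteBelow r b) then (#A : ℝ) else 0) :=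
          sum_le_sum fun b _ => hcol b
      _ = #B * (δ / 2 * #A) + #B' * #A := by
          simp only [sum_add_distrib, ← sum_filter, sum_const, nsmul_eq_mul, B']
  have hA0 : (0 : ℝ) < #A := by exact_mod_cast hA.card_pos
  refine le_of_mul_le_mul_right ?_ hA0
  linarith

theorem exists_card_eq_forall_rel (hA : A.Nonempty) (hδ0 : 0 ≤ δ) (hδ1 : δ ≤ 1)
    (hdens : δ * #A * #B ≤ #(Rel.interedges r A B)) {s : ℕ} (hs : 4 * s ≤ δ * #A) :
    ∃ S ⊆ A, ∃ T ⊆ B, #S = s ∧ (∀ a ∈ S, ∀ b ∈ T, r a b) ∧ δ / 2 * (δ / 4) ^ s * #B ≤ #T := by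
  classical
  set B' := {b ∈ B | δ / 2 * #A ≤ #(A.bipartiteBelow r b)}
  have hB' : δ / 2 * #B ≤ #B' := mul_card_le_card_rich_columns hA hδ0 hdens
  have hdouble : ∑ S ∈ A.powersetCard s, #{b ∈ B' | S ⊆ A.bipartiteBelow r b} =
      ∑ b ∈ B', (#(A.bipartiteBelow r b)).choose s := by
    refine (sum_card_bipartiteAbove_eq_sum_card_bipartiteBelow _).trans
      (sum_congr rfl fun b _ => ?_)
    rw [← card_powersetCard]
    congr 1
    ext S
    simp only [mem_bipartiteBelow, mem_powersetCard]
    exact ⟨fun h => ⟨h.2, h.1.2⟩, fun h => ⟨⟨h.1.trans (filter_subset _ _), h.2⟩, h.1⟩⟩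
  have havg : ∑ _S ∈ A.powersetCard s, #B' * (δ / 4) ^ s ≤
      ∑ S ∈ A.powersetCard s, (#{b ∈ B' | S ⊆ A.bipartiteBelow r b} : ℝ) :=
    calc ∑ _S ∈ A.powersetCard s, #B' * (δ / 4) ^ s
        = ∑ _b ∈ B', (#A).choose s * (δ / 4) ^ s := by
          simp only [sum_const, card_powersetCard, nsmul_eq_mul, mul_left_comm]
      _ ≤ ∑ b ∈ B', ((#(A.bipartiteBelow r b)).choose s : ℝ) := sum_le_sum fun b hb =>
          choose_mul_pow_le_choose hδ0 (mem_filter.mp hb).2 hs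
      _ = _ := by exact_mod_cast hdouble.symm
  have hsA : s ≤ #A := by
    have h : δ * #A ≤ #A := mul_le_of_le_one_left (by positivity) hδ1
    exact_mod_cast (by linarith [s.cast_nonneg (α := ℝ)] : (s : ℝ) ≤ #A)
  obtain ⟨S, hS, hST⟩ := exists_le_of_sum_le (powersetCard_nonempty.mpr hsA) havg
  obtain ⟨hSA, hSs⟩ := mem_powersetCard.mp hS
  refine ⟨S, hSA, {b ∈ B' | S ⊆ A.bipartiteBelow r b},
    (filter_subset _ _).trans (filter_subset _ _), hSs,
    fun a ha b hb => (mem_filter.mp ((mem_filter.mp hb).2 ha)).2, le_trans ?_ hST⟩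
  rw [mul_right_comm]
  gcongr

end KovariSosTuran

section Biclique

variable {α β : Type*} {A : Finset α} {B : Finset β} {R : Finset (α × β)} {D Z : ℝ} {s : ℕ}

theorem pow_le_sqrt_of_le_logb (hZ : 1 < Z) (hD : Z ^ 32 ≤ D)
    (hs : s ≤ Real.logb Z D / 2 ^ 10 + 1) : Z ^ (7 + 6 * s) ≤ √D := by
  have hD0 : 0 < D := lt_of_lt_of_le (by positivity) hD
  have hlog : ((32 : ℕ) : ℝ) ≤ Real.logb Z D := by
    rwa [Real.le_logb_iff_rpow_le hZ hD0, Real.rpow_natCast]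
  have hexp : (((7 + 6 * s) * 2 : ℕ) : ℝ) ≤ Real.logb Z D := by
    push_cast at hlog ⊢
    linarith
  refine Real.le_sqrt_of_sq_le ?_
  rwa [Real.le_logb_iff_rpow_le hZ hD0, Real.rpow_natCast, pow_mul] at hexp

theorem four_mul_le_of_le_logb (hZ : 32 ≤ Z) (hD : Z ^ 32 ≤ D)
    (hs : s ≤ Real.logb Z D / 2 ^ 10 + 1) : 4 * s ≤ 4 / Z ^ 6 * (D / 32) := by
  have hZ1 : 1 ≤ Z := by linarith
  have hsZ : (s : ℝ) ≤ Z ^ s :=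
    (show (s : ℝ) ≤ 2 ^ s by exact_mod_cast s.lt_two_pow_self.le).trans
      (pow_le_pow_left₀ (by norm_num) (by linarith) s)
  have hsD : Z ^ 7 * s ≤ D :=
    calc Z ^ 7 * s ≤ Z ^ 7 * Z ^ s := by gcongr
      _ ≤ Z ^ (7 + 6 * s) := by
          rw [← pow_add]
          exact pow_le_pow_right₀ hZ1 (by omega)
      _ ≤ √D := pow_le_sqrt_of_le_logb (by linarith) hD hs
      _ ≤ D := Real.sqrt_le_iff.mpr ⟨by linarith [one_le_pow₀ hZ1 (n := 32)],
          le_self_pow₀ ((one_le_pow₀ hZ1).trans hD) two_ne_zero⟩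
  calc (4 : ℝ) * s = 4 / Z ^ 7 * (Z ^ 7 * s) := by field_simp
    _ ≤ 4 / Z ^ 7 * D := by gcongr
    _ = 4 / Z ^ 6 * (D / Z) := by field_simp
    _ ≤ 4 / Z ^ 6 * (D / 32) := by
        gcongr
        linarith [one_le_pow₀ hZ1 (n := 32)]

theorem sqrt_le_of_le_logb (hZ : 32 ≤ Z) (hD : Z ^ 32 ≤ D)
    (hs : s ≤ Real.logb Z D / 2 ^ 10 + 1) :
    √D ≤ 4 / Z ^ 6 / 2 * (4 / Z ^ 6 / 4) ^ s * (D / 32) := by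
  have hD0 : 0 < D := lt_of_lt_of_le (by positivity) hD
  calc √D = D / √D := Real.div_sqrt.symm
    _ ≤ D / Z ^ (7 + 6 * s) := by
        gcongr
        exact pow_le_sqrt_of_le_logb (by linarith) hD hs
    _ = 1 / Z ^ 6 * (1 / Z ^ 6) ^ s * (D / Z) := by
        rw [pow_add, pow_mul, one_div_pow]
        field_simp
    _ ≤ 2 / Z ^ 6 * (1 / Z ^ 6) ^ s * (D / 32) := by
        gcongr
        norm_num
    _ = 4 / Z ^ 6 / 2 * (4 / Z ^ 6 / 4) ^ s * (D / 32) := by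
        rw [show 4 / Z ^ 6 / 2 = 2 / Z ^ 6 by ring, show 4 / Z ^ 6 / 4 = 1 / Z ^ 6 by ring]

theorem exists_product_subset_of_density (hZ : 32 ≤ Z) (hD : Z ^ 32 ≤ D)
    (hA : D / 32 ≤ #A) (hB : D / 32 ≤ #B) (hR : R ⊆ A ×ˢ B) (hdens : 4 / Z ^ 6 * #A * #B ≤ #R)
    (hs : s ≤ Real.logb Z D / 2 ^ 10 + 1) :
    ∃ S ⊆ A, ∃ T ⊆ B, #S = s ∧ S ×ˢ T ⊆ R ∧ √D ≤ #T := by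
  classical
  have hD0 : 0 < D := lt_of_lt_of_le (by positivity) hD
  have hA0 : (0 : ℝ) < #A := lt_of_lt_of_le (by positivity) hA
  have hZ6 : 4 / Z ^ 6 ≤ 1 := by
    rw [div_le_one (by positivity)]
    linarith [le_self_pow₀ (by linarith : 1 ≤ Z) (show 6 ≠ 0 by norm_num)]
  have hsA : 4 * s ≤ 4 / Z ^ 6 * #A := (four_mul_le_of_le_logb hZ hD hs).trans (by gcongr)
  have hR' : Rel.interedges (fun a b => (a, b) ∈ R) A B = R := by
    rw [Rel.interedges, filter_mem_eq_inter, inter_eq_right.mpr hR]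
  obtain ⟨S, hSA, T, hTB, hS, hST, hT⟩ :=
    exists_card_eq_forall_rel (r := fun a b => (a, b) ∈ R) (card_pos.mp (by exact_mod_cast hA0))
      (by positivity) hZ6 (by rwa [hR']) hsA
  refine ⟨S, hSA, T, hTB, hS, fun e he => ?_, ?_⟩
  · exact hST _ (mem_product.mp he).1 _ (mem_product.mp he).2
  · exact (sqrt_le_of_le_logb hZ hD hs).trans (le_trans (by gcongr) hT)

theorem exists_product_subset_of_le_card {K N q : ℝ} (hK : 1 ≤ K) (hN : 0 < N)
    (hD : (2 ^ 20 * K) ^ 32 ≤ q / (K ^ 2 * N)) (hA : #A ≤ N) (hB : #B ≤ N)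
    (hAB : #A * #B ≤ 2 ^ 10 * K ^ 4 * q) (hR : R ⊆ A ×ˢ B) (hRq : q / (32 * K ^ 2) ≤ #R)
    (hs : s ≤ Real.logb (2 ^ 20 * K) (q / (K ^ 2 * N)) / 2 ^ 10 + 1) :
    ∃ S ⊆ A, ∃ T ⊆ B, #S = s ∧ S ×ˢ T ⊆ R ∧ √(q / (K ^ 2 * N)) ≤ #T := by
  have hprod : q / (K ^ 2 * N) / 32 * N ≤ (#A : ℝ) * #B :=
    calc q / (K ^ 2 * N) / 32 * N = (q / (32 * K ^ 2) : ℝ) := by field_simp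
      _ ≤ (#R : ℝ) := hRq
      _ ≤ (#A : ℝ) * #B := by exact_mod_cast (card_le_card hR).trans_eq (card_product A B)
  refine exists_product_subset_of_density (by linarith) hD ?_ ?_ hR ?_ hs
  · exact le_of_mul_le_mul_right (hprod.trans (by gcongr)) hN
  · exact le_of_mul_le_mul_right (hprod.trans (by rw [mul_comm]; gcongr)) hN
  · have hq : 0 < q :=
      (div_pos_iff_of_pos_right (by positivity)).mp (lt_of_lt_of_le (by positivity) hD)
    calc 4 / (2 ^ 20 * K) ^ 6 * #A * #B ≤ 4 / (2 ^ 20 * K) ^ 6 * (2 ^ 10 * K ^ 4 * q) := by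
          rw [mul_assoc]
          gcongr
      _ = 1 / 2 ^ 103 * (q / (32 * K ^ 2)) := by
          field_simp
          ring
      _ ≤ q / (32 * K ^ 2) := mul_le_of_le_one_left (by positivity) (by norm_num)
      _ ≤ (#R : ℝ) := hRq

end Biclique

section Packing

theorem exists_pairwiseDisjoint_sub_lt_card_biUnion {ι α : Type*} [DecidableEq α]
    {C : Finset ι} {f : ι → Finset α} (hC : ∀ i ∈ C, (f i).Nonempty) {R : Finset α} {c : ℝ}
    (hR : ∀ R' ⊆ R, c ≤ #R' → ∃ i ∈ C, f i ⊆ R') :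
    ∃ F ⊆ C, (F : Set ι).PairwiseDisjoint f ∧ #R - c < #(F.biUnion f) := by
  classical
  obtain ⟨F, hF⟩ := (C.powerset.filter fun F : Finset ι =>
    (F : Set ι).PairwiseDisjoint f).exists_maximal ⟨∅, by simp⟩
  obtain ⟨hFC, hFdisj⟩ := mem_filter.mp hF.prop
  refine ⟨F, mem_powerset.mp hFC, hFdisj, ?_⟩
  have hrem : #(R \ F.biUnion f) < c := by
    by_contra! hc
    obtain ⟨i, hi, hiR⟩ := hR _ sdiff_subset hc
    have hiU : Disjoint (f i) (F.biUnion f) := disjoint_of_subset_left hiR sdiff_disjoint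
    have hiF : i ∈ F := by
      refine insert_subset_iff.mp (hF.le_of_ge ?_ (subset_insert i F)) |>.1
      rw [mem_filter, mem_powerset, insert_subset_iff, coe_insert]
      exact ⟨⟨hi, mem_powerset.mp hFC⟩, hFdisj.insert fun j hj _ =>
        (disjoint_biUnion_right _ _ _).mp hiU j hj⟩
    exact (hC i hi).ne_empty (disjoint_self.mp
      (disjoint_of_subset_right (subset_biUnion_of_mem f hiF) hiU))
  have hcard : (#R : ℝ) ≤ #(F.biUnion f) + #(R \ F.biUnion f) := by
    exact_mod_cast (card_le_card le_sup_sdiff).trans (card_union_le _ _)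
  linarith

variable {G : Type*} [AddCommGroup G] [DecidableEq G] {Λ Q A B : Finset G} {a b c : ℝ}

/-- `Q` contains pairwise disjoint sumsets `L i + L' i`, with no element common to some `L i` and
some `L' j`, all taken inside `Λ`; here `a` and `b` bound the sizes of the `L i` and the `L' i` from
below, and `c` bounds the size of the part of `Q` covered. -/
def HasSumsetPacking (Λ Q : Finset G) (a b c : ℝ) : Prop :=
  ∃ (h : ℕ) (L L' : Fin h → Finset G),
    (∀ i, L i ⊆ Λ) ∧ (∀ i, L' i ⊆ Λ) ∧
    (∀ i j, L i ∩ L' j = ∅) ∧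
    (∀ i, L i + L' i ⊆ Q) ∧
    (∀ i, a ≤ #(L i)) ∧
    (∀ i, b ≤ #(L' i)) ∧
    (∀ i j, i ≠ j → Disjoint (L i + L' i) (L j + L' j)) ∧
    c ≤ #(Q ∩ univ.biUnion fun i => L i + L' i)

theorem HasSumsetPacking.mono (h : HasSumsetPacking Λ Q a b c) {a' b' c' : ℝ} (ha : a' ≤ a)
    (hb : b' ≤ b) (hc : c' ≤ c) : HasSumsetPacking Λ Q a' b' c' := by
  obtain ⟨n, L, L', hL, hL', hdisj, hQ, hLa, hLb, hpair, hcard⟩ := h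
  exact ⟨n, L, L', hL, hL', hdisj, hQ, fun i => ha.trans (hLa i), fun i => hb.trans (hLb i),
    hpair, hc.trans hcard⟩

theorem disjoint_add_of_disjoint_product {S T S' T' : Finset G}
    (hinj : Set.InjOn (fun e : G × G => e.1 + e.2) (A ×ˢ B : Finset (G × G)))
    (hST : S ×ˢ T ⊆ A ×ˢ B) (hST' : S' ×ˢ T' ⊆ A ×ˢ B) (h : Disjoint (S ×ˢ T) (S' ×ˢ T')) :
    Disjoint (S + T) (S' + T') := by
  simp only [disjoint_left, mem_add]
  rintro _ ⟨u, hu, v, hv, rfl⟩ ⟨u', hu', v', hv', huv⟩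
  have huv_mem : (u, v) ∈ S ×ˢ T := mk_mem_product hu hv
  have huv_mem' : (u', v') ∈ S' ×ˢ T' := mk_mem_product hu' hv'
  rw [hinj (hST' huv_mem') (hST huv_mem) huv] at huv_mem'
  exact disjoint_left.mp h huv_mem huv_mem'

theorem hasSumsetPacking_of_pairwiseDisjoint {F : Finset (Finset G × Finset G)} (hA : A ⊆ Λ)
    (hB : B ⊆ Λ) (hAB : Disjoint A B)
    (hinj : Set.InjOn (fun e : G × G => e.1 + e.2) (A ×ˢ B : Finset (G × G)))
    (hF : ∀ e ∈ F, e.1 ⊆ A ∧ e.2 ⊆ B ∧ a ≤ #e.1 ∧ b ≤ #e.2 ∧ e.1 + e.2 ⊆ Q)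
    (hpair : (F : Set (Finset G × Finset G)).PairwiseDisjoint fun e => e.1 ×ˢ e.2) :
    HasSumsetPacking Λ Q a b #(F.biUnion fun e => e.1 ×ˢ e.2) := by
  have hprod {e : Finset G × Finset G} (he : e ∈ F) : e.1 ×ˢ e.2 ⊆ A ×ˢ B :=
    product_subset_product (hF e he).1 (hF e he).2.1
  let φ := F.equivFin.symm
  refine ⟨#F, fun i => (φ i).1.1, fun i => (φ i).1.2, fun i => (hF _ (φ i).2).1.trans hA,
    fun i => (hF _ (φ i).2).2.1.trans hB, fun i j => ?_, fun i => (hF _ (φ i).2).2.2.2.2,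
    fun i => (hF _ (φ i).2).2.2.1, fun i => (hF _ (φ i).2).2.2.2.1, fun i j hij => ?_, ?_⟩
  · rw [← disjoint_iff_inter_eq_empty]
    exact hAB.mono (hF _ (φ i).2).1 (hF _ (φ j).2).2.1
  · exact disjoint_add_of_disjoint_product hinj (hprod (φ i).2) (hprod (φ j).2)
      (hpair (φ i).2 (φ j).2 fun h => hij (φ.injective (Subtype.ext h)))
  · rw [Nat.cast_le]
    refine card_le_card_of_injOn (fun e => e.1 + e.2) (fun x hx => ?_)
      (hinj.mono (coe_subset.mpr (biUnion_subset.mpr fun e he => hprod he)))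
    obtain ⟨e, he, hx⟩ := mem_biUnion.mp hx
    have hsum := add_mem_add (mem_product.mp hx).1 (mem_product.mp hx).2
    refine mem_inter.mpr ⟨(hF e he).2.2.2.2 hsum, mem_biUnion.mpr ⟨φ.symm ⟨e, he⟩, mem_univ _, ?_⟩⟩
    simpa only [Equiv.apply_symm_apply] using hsum

end Packing

section SumsetPacking

variable {G : Type*} [AddCommGroup G] [Module (ZMod 2) G] {Λ Q A B : Finset G} {m p : ℕ} {K : ℝ}

theorem InLambdaFamily.injOn_add_product (hΛ : InLambdaFamily m Λ) (hm : 4 ≤ m) (hA : A ⊆ Λ)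
    (hB : B ⊆ Λ) (hAB : Disjoint A B) :
    Set.InjOn (fun e : G × G => e.1 + e.2) (A ×ˢ B : Finset (G × G)) := by
  rintro ⟨a, b⟩ hab ⟨c, d⟩ hcd h
  obtain ⟨ha, hb⟩ := mem_product.mp hab
  obtain ⟨hc, hd⟩ := mem_product.mp hcd
  have hne : a ≠ b := fun h => disjoint_left.mp hAB ha (h ▸ hb)
  have hpair := (hΛ.add_eq_add_iff hm (hA ha) (hB hb) (hA hc) (hB hd) hne).mp h
  rcases Sym2.eq_iff.mp hpair with ⟨rfl, rfl⟩ | ⟨rfl, rfl⟩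
  · rfl
  · exact absurd hd (disjoint_left.mp hAB ha)

variable [DecidableEq G]

theorem exists_disjoint_le_card_filter_add_mem (hK : 1 ≤ K) (hp : 64 * K ≤ p)
    (hΛ : InLambdaFamily (4 * p) Λ) (hQ : Q ⊆ dDot 2 Λ) (hQ0 : Q.Nonempty)
    (hE : p ^ (2 * p) * #Q ^ p / K ^ p ≤ (_root_.addEnergy p Q : ℝ)) :
    ∃ A ⊆ Λ, ∃ B ⊆ Λ, Disjoint A B ∧ #A * #B ≤ 2 ^ 10 * K ^ 4 * #Q ∧
      3 * #Q / (32 * K ^ 2) ≤ #{e ∈ A ×ˢ B | e.1 + e.2 ∈ Q} := by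
  have hp1 : 1 ≤ p := by exact_mod_cast (by linarith : (1 : ℝ) ≤ p)
  have htrace := le_trace_adjMatrix_sumGraph_pow_four hK hp hΛ hQ hQ0 hE
  have hτ : (0 : ℝ) < #Q ^ 2 / K ^ 2 :=
    div_pos (pow_pos (Nat.cast_pos.mpr hQ0.card_pos) 2) (by positivity)
  obtain ⟨A, B, hAB, hprod, hcut⟩ := exists_disjoint_le_card_interedges hτ htrace
  rw [card_edgeFinset_sumGraph (by omega) hΛ hQ] at hprod hcut
  have hcard : #((sumGraph Λ Q).interedges A B) ≤
      #{e ∈ A.map (.subtype _) ×ˢ B.map (.subtype _) | e.1 + e.2 ∈ Q} := by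
    refine card_le_card_of_injOn (Prod.map (↑) (↑)) (fun e he => ?_)
      (Subtype.val_injective.prodMap Subtype.val_injective).injOn
    obtain ⟨heA, heB, hadj⟩ := Rel.mem_interedges_iff.mp he
    exact mem_filter.mpr ⟨mk_mem_product (mem_map_of_mem _ heA) (mem_map_of_mem _ heB), hadj.2⟩
  refine ⟨A.map (.subtype _), map_subtype_subset A, B.map (.subtype _), map_subtype_subset B,
    (disjoint_map _).mpr hAB, ?_, le_trans ?_ (Nat.cast_le.mpr hcard)⟩
  · rw [card_map, card_map]
    have h : (#A * #B : ℝ) * (#Q ^ 4 / K ^ 4) ≤ 2 ^ 10 * K ^ 4 * #Q * (#Q ^ 4 / K ^ 4) := by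
      convert hprod using 1 <;> field_simp
    exact le_of_mul_le_mul_right h (by positivity)
  · rw [div_le_iff₀ (by positivity)]
    have h : (3 * #Q : ℝ) * (#Q / K ^ 2) ≤
        #((sumGraph Λ Q).interedges A B) * (32 * K ^ 2) * (#Q / K ^ 2) := by
      convert hcut using 1 <;> field_simp
    exact le_of_mul_le_mul_right h (by positivity)

theorem hasSumsetPacking_of_le_card_filter_add_mem {c q : ℝ} (hΛ : InLambdaFamily m Λ)
    (hm : 4 ≤ m) (hK : 1 ≤ K) (hD : (2 ^ 20 * K) ^ 32 ≤ q / (K ^ 2 * #Λ)) (hA : A ⊆ Λ)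
    (hB : B ⊆ Λ) (hAB : Disjoint A B) (hprod : #A * #B ≤ 2 ^ 10 * K ^ 4 * q)
    (hc : c + q / (32 * K ^ 2) ≤ #{e ∈ A ×ˢ B | e.1 + e.2 ∈ Q}) :
    HasSumsetPacking Λ Q (Real.logb (2 ^ 20 * K) (q / (K ^ 2 * #Λ)) / 2 ^ 10)
      (√(q / (K ^ 2 * #Λ))) c := by
  set D := q / (K ^ 2 * #Λ)
  set R := {e ∈ A ×ˢ B | e.1 + e.2 ∈ Q}
  set a := Real.logb (2 ^ 20 * K) D / 2 ^ 10
  have hD1 : 1 < D := (one_lt_pow₀ (by linarith) (by norm_num)).trans_le hD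
  have hb : 0 < √D := Real.sqrt_pos.mpr (by linarith)
  have ha : 0 < a := div_pos (Real.logb_pos (by linarith) hD1) (by norm_num)
  have hΛ0 : (0 : ℝ) < #Λ := Nat.cast_pos.mpr <| Nat.pos_of_ne_zero fun h => by
    norm_num [D, h] at hD1
  set C := {e ∈ A.powerset ×ˢ B.powerset | a ≤ #e.1 ∧ √D ≤ #e.2 ∧ e.1 ×ˢ e.2 ⊆ R}
  have hC : ∀ e ∈ C, (e.1 ×ˢ e.2).Nonempty := fun e he => by
    obtain ⟨-, hea, heb, -⟩ := mem_filter.mp he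
    exact (card_pos.mp (by exact_mod_cast ha.trans_le hea)).product
      (card_pos.mp (by exact_mod_cast hb.trans_le heb))
  have hR : ∀ R' ⊆ R, q / (32 * K ^ 2) ≤ #R' → ∃ e ∈ C, e.1 ×ˢ e.2 ⊆ R' := fun R' hR' hq => by
    obtain ⟨S, hSA, T, hTB, hS, hST, hT⟩ := exists_product_subset_of_le_card hK hΛ0 hD
      (by exact_mod_cast card_le_card hA) (by exact_mod_cast card_le_card hB) hprod
      (hR'.trans (filter_subset _ _)) hq (Nat.ceil_lt_add_one ha.le).le
    exact ⟨(S, T), mem_filter.mpr ⟨mk_mem_product (mem_powerset.mpr hSA) (mem_powerset.mpr hTB),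
      hS ▸ Nat.le_ceil a, hT, hST.trans hR'⟩, hST⟩
  obtain ⟨F, hF, hpair, hcard⟩ := exists_pairwiseDisjoint_sub_lt_card_biUnion hC hR
  refine (hasSumsetPacking_of_pairwiseDisjoint hA hB hAB (hΛ.injOn_add_product hm hA hB hAB)
    (fun e he => ?_) hpair).mono le_rfl le_rfl (by linarith)
  obtain ⟨heAB, hea, heb, heR⟩ := mem_filter.mp (hF he)
  obtain ⟨heA, heB⟩ := mem_product.mp heAB
  exact ⟨mem_powerset.mp heA, mem_powerset.mp heB, hea, heb, add_subset_iff.mpr fun x hx y hy =>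
    (mem_filter.mp (heR (mk_mem_product hx hy))).2⟩

theorem hasSumsetPacking_of_le_addEnergy (hK : 1 ≤ K) (hp : 64 * K ≤ p)
    (hΛ : InLambdaFamily (4 * p) Λ) (hQ : Q ⊆ dDot 2 Λ)
    (hE : p ^ (2 * p) * #Q ^ p / K ^ p ≤ (_root_.addEnergy p Q : ℝ))
    (hD : (2 ^ 20 * K) ^ 32 ≤ #Q / (K ^ 2 * #Λ)) :
    HasSumsetPacking Λ Q (Real.logb (2 ^ 20 * K) (#Q / (K ^ 2 * #Λ)) / 2 ^ 10)
      (√(#Q / (K ^ 2 * #Λ))) (#Q / (16 * K ^ 2)) := by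
  have hQ0 : Q.Nonempty := by
    by_contra! h
    have hpos : 0 < (2 ^ 20 * K) ^ 32 := by positivity
    simp only [h, card_empty, Nat.cast_zero, zero_div] at hD
    linarith
  have hp1 : 1 ≤ p := by exact_mod_cast (by linarith : (1 : ℝ) ≤ p)
  obtain ⟨A, hA, B, hB, hAB, hprod, hcard⟩ :=
    exists_disjoint_le_card_filter_add_mem hK hp hΛ hQ hQ0 hE
  refine hasSumsetPacking_of_le_card_filter_add_mem hΛ (by omega) hK hD hA hB hAB hprod
    (le_of_eq_of_le ?_ hcard)
  field_simp
  norm_num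

end SumsetPacking

section Parameters

variable {K η N q x D Z : ℝ} {p : ℕ}

theorem pow_le_rpow_mul_rpow_mul_logb (hK : 1 ≤ K) (hη : 0 < η) (hp : 2 ^ 30 * K / η ≤ p)
    (hN : 2 ≤ N) :
    (2 ^ 20 * K) ^ 32 ≤ (2 ^ 30 * K ^ 11 * p) ^ (η * p) * N ^ η * Real.logb 2 N := by
  have hηp : 2 ^ 30 * K ≤ η * p := (div_le_iff₀' hη).mp hp
  have hp1 : (1 : ℝ) ≤ p := by
    have hp0 : (0 : ℝ) < p := lt_of_lt_of_le (by positivity) hp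
    exact_mod_cast hp0
  have hbase : 2 ^ 20 * K ≤ 2 ^ 30 * K ^ 11 * p :=
    calc 2 ^ 20 * K ≤ 2 ^ 30 * K ^ 11 :=
          mul_le_mul (by norm_num) (le_self_pow₀ hK (by norm_num)) (by positivity) (by norm_num)
      _ ≤ 2 ^ 30 * K ^ 11 * p := le_mul_of_one_le_right (by positivity) hp1
  have hlog : 1 ≤ Real.logb 2 N := by
    rwa [Real.le_logb_iff_rpow_le one_lt_two (by linarith), Real.rpow_one]
  calc (2 ^ 20 * K) ^ 32 = (2 ^ 20 * K) ^ (32 : ℝ) := by rw [← Real.rpow_natCast]; norm_num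
    _ ≤ (2 ^ 20 * K) ^ (η * p) := Real.rpow_le_rpow_of_exponent_le (by linarith) (by linarith)
    _ ≤ (2 ^ 30 * K ^ 11 * p) ^ (η * p) :=
        Real.rpow_le_rpow (by positivity) hbase (by positivity)
    _ ≤ (2 ^ 30 * K ^ 11 * p) ^ (η * p) * N ^ η := le_mul_of_one_le_right (by positivity)
        (Real.one_le_rpow (by linarith) hη.le)
    _ ≤ _ := le_mul_of_one_le_right (by positivity) hlog

theorem pow_le_div_of_mul_rpow_le (hK : 1 ≤ K) (hη : 0 < η) (hp : 2 ^ 30 * K / η ≤ p)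
    (hN : 2 ≤ N) (hq : (2 : ℝ) ^ (60 + 2 / η) * K ^ 17 * p ^ 3 * N *
      ((2 ^ 30 * K ^ 11 * p) ^ (η * p) * N ^ η * Real.logb 2 N) ≤ q) :
    (2 ^ 20 * K) ^ 32 ≤ q / (K ^ 2 * N) := by
  have hp1 : (1 : ℝ) ≤ p := by
    have hp0 : (0 : ℝ) < p := lt_of_lt_of_le (by positivity) hp
    exact_mod_cast hp0
  have hfactor : K ^ 2 * N ≤ (2 : ℝ) ^ (60 + 2 / η) * K ^ 17 * p ^ 3 * N := by
    gcongr
    calc K ^ 2 ≤ K ^ 17 := pow_le_pow_right₀ hK (by norm_num)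
      _ ≤ (2 : ℝ) ^ (60 + 2 / η) * K ^ 17 := le_mul_of_one_le_left (by positivity)
          (Real.one_le_rpow one_le_two (by positivity))
      _ ≤ _ := le_mul_of_one_le_right (by positivity) (one_le_pow₀ hp1)
  rw [le_div_iff₀ (by positivity), mul_comm]
  exact (mul_le_mul hfactor (pow_le_rpow_mul_rpow_mul_logb hK hη hp hN) (by positivity)
    (by positivity)).trans hq

theorem logb_two_div_le_logb_div (hx : 0 < x) (hxD : x ≤ D) (hZ : 1 ≤ Z) :
    Real.logb 2 x / (2 ^ 10 * Real.logb 2 Z) ≤ Real.logb Z D / 2 ^ 10 := by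
  have hlogZ : 0 ≤ Real.log Z := Real.log_nonneg hZ
  calc Real.logb 2 x / (2 ^ 10 * Real.logb 2 Z) = Real.log x / Real.log Z / 2 ^ 10 := by
        have hlog2 : Real.log 2 ≠ 0 := (Real.log_pos one_lt_two).ne'
        rw [Real.logb, Real.logb]
        field_simp
    _ ≤ Real.log D / Real.log Z / 2 ^ 10 := by gcongr

theorem mul_rpow_le_sqrt {c : ℝ} (hc : c ≤ 1) (hη0 : 0 ≤ η) (hη : η ≤ 1 / 2) (hx : 0 ≤ x)
    (hxD : x ≤ D) (hD : 1 ≤ D) : c * x ^ η ≤ √D :=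
  calc c * x ^ η ≤ x ^ η := mul_le_of_le_one_left (by positivity) hc
    _ ≤ D ^ η := Real.rpow_le_rpow hx hxD hη0
    _ ≤ D ^ (1 / 2 : ℝ) := Real.rpow_le_rpow_of_exponent_le hD hη
    _ = √D := (Real.sqrt_eq_rpow D).symm

theorem HasSumsetPacking.of_sqrt {G : Type*} [AddCommGroup G] [DecidableEq G] {Λ Q : Finset G}
    (hK : 1 ≤ K) (hη0 : 0 ≤ η) (hη : η ≤ 1 / 2) (hp : 0 < p)
    (hD : 1 ≤ #Q / (K ^ 2 * #Λ))
    (h : HasSumsetPacking Λ Q (Real.logb (2 ^ 20 * K) (#Q / (K ^ 2 * #Λ)) / 2 ^ 10)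
      (√(#Q / (K ^ 2 * #Λ))) (#Q / (16 * K ^ 2))) :
    HasSumsetPacking Λ Q
      (Real.logb 2 (#Q / (16 * K ^ 9 * #Λ)) / (2 ^ 10 * Real.logb 2 (2 ^ 20 * K)))
      (1 / (2 ^ 10 * p ^ 2) * (#Q / (K ^ 9 * #Λ)) ^ η) (#Q / (16 * K ^ 9)) := by
  have hQ : (0 : ℝ) < #Q := Nat.cast_pos.mpr <| Nat.pos_of_ne_zero fun h => by
    norm_num [h] at hD
  have hΛ : (0 : ℝ) < #Λ := Nat.cast_pos.mpr <| Nat.pos_of_ne_zero fun h => by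
    norm_num [h] at hD
  have hK9 : K ^ 2 ≤ K ^ 9 := pow_le_pow_right₀ hK (by norm_num)
  have hp1 : (1 : ℝ) ≤ p := by exact_mod_cast hp
  have hcoeff : 1 / (2 ^ 10 * (p : ℝ) ^ 2) ≤ 1 := by
    rw [div_le_one (by positivity)]
    linarith [one_le_pow₀ hp1 (n := 2)]
  refine h.mono (logb_two_div_le_logb_div (by positivity) ?_ (by linarith))
    (mul_rpow_le_sqrt hcoeff hη0 hη (by positivity) (by gcongr) hD) (by gcongr)
  gcongr
  linarith [pow_pos (zero_lt_one.trans_le hK) 9]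

end Parameters

theorem stmt15_general {G : Type*} [AddCommGroup G] [DecidableEq G] [Module (ZMod 2) G]
    {Λ Q : Finset G} {p : ℕ} {K η : ℝ} (hK : 1 ≤ K) (hη0 : 0 < η) (hη : η ≤ 1 / 2)
    (hp : 2 ^ 30 * K / η ≤ p) (hΛ : InLambdaFamily (4 * p) Λ) (hQ : Q ⊆ dDot 2 Λ)
    (hE : p ^ (2 * p) * #Q ^ p / K ^ p ≤ (_root_.addEnergy p Q : ℝ))
    (hcard : (2 : ℝ) ^ (60 + 2 / η) * K ^ 17 * p ^ 3 * #Λ *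
      ((2 ^ 30 * K ^ 11 * p) ^ (η * p) * #Λ ^ η * Real.logb 2 #Λ) ≤ #Q) :
    HasSumsetPacking Λ Q
      (Real.logb 2 (#Q / (16 * K ^ 9 * #Λ)) / (2 ^ 10 * Real.logb 2 (2 ^ 20 * K)))
      (1 / (2 ^ 10 * p ^ 2) * (#Q / (K ^ 9 * #Λ)) ^ η) (#Q / (16 * K ^ 9)) := by
  rcases Q.eq_empty_or_nonempty with rfl | ⟨q, hq⟩
  · exact ⟨0, Fin.elim0, Fin.elim0, by simp⟩
  obtain ⟨a, ha, b, hb, hab, -⟩ := mem_dDot_two.mp (hQ hq)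
  have hΛ2 : (2 : ℝ) ≤ #Λ := by exact_mod_cast one_lt_card.mpr ⟨a, ha, b, hb, hab⟩
  have hp64 : 64 * K ≤ p := by
    refine le_trans ?_ hp
    rw [le_div_iff₀ hη0]
    nlinarith
  have hp0 : 0 < p := by exact_mod_cast (by linarith : (0 : ℝ) < p)
  have hD : (2 ^ 20 * K) ^ 32 ≤ #Q / (K ^ 2 * #Λ) :=
    pow_le_div_of_mul_rpow_le hK hη0 hp hΛ2 hcard
  exact (hasSumsetPacking_of_le_addEnergy hK hp64 hΛ hQ hE hD).of_sqrt hK hη0.le hη hp0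
    ((one_le_pow₀ (by linarith)).trans hD)

theorem stmt15 {n : ℕ} (K η : ℝ) (hK : 0 < K) (hη0 : 0 < η) (hη : η ≤ 1 / 2)
    (p : ℕ) (hp : 0 < p)
    (Λ : Finset (Fin n → ZMod 2)) (hΛ : InLambdaFamily (4 * p) Λ)
    (Q : Finset (Fin n → ZMod 2)) (hQ : Q ⊆ dDot 2 Λ)
    (Kst : ℝ) (hKst : Kst = max 1 K)
    (hpK : 2 ^ 30 * Kst / η ≤ (p : ℝ))
    (hT : (p : ℝ) ^ (2 * p) * (Q.card : ℝ) ^ p / K ^ p ≤ (addEnergy p Q : ℝ))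
    (hplog : (p : ℝ) ≤ Real.logb 2 (Λ.card : ℝ) /
      Real.logb 2 (Real.logb 2 (Λ.card : ℝ)))
    (hQcard : (2 : ℝ) ^ (60 + 2 / η) * Kst ^ 17 * (p : ℝ) ^ 3 * (Λ.card : ℝ) *
        max ((2 ^ 30 * Kst ^ 11 * p) ^ (η * p) * (Λ.card : ℝ) ^ η *
              Real.logb 2 (Λ.card : ℝ))
            (Real.exp (Real.logb 2 (2 ^ 30 * Kst ^ 20) *
              Real.logb 2 ((p : ℝ) * Real.logb 2 Kst / Real.logb 2 (p : ℝ)) /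
              Real.logb 2 ((2 : ℝ) ^ (-25 : ℤ) * η * p / Kst)))
        ≤ (Q.card : ℝ)) :
    ∃ (h : ℕ) (L L' : Fin h → Finset (Fin n → ZMod 2)),
      (∀ i, L i ⊆ Λ) ∧ (∀ i, L' i ⊆ Λ) ∧
      (∀ i j, L i ∩ L' j = ∅) ∧
      (∀ i, L i + L' i ⊆ Q) ∧
      (∀ i, Real.logb 2 ((Q.card : ℝ) / (16 * Kst ^ 9 * Λ.card)) /
        (2 ^ 10 * Real.logb 2 (2 ^ 20 * Kst)) ≤ ((L i).card : ℝ)) ∧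
      (∀ i, (1 / (2 ^ 10 * (p : ℝ) ^ 2)) *
        ((Q.card : ℝ) / (Kst ^ 9 * Λ.card)) ^ η ≤ ((L' i).card : ℝ)) ∧
      (∀ i j, i ≠ j → Disjoint (L i + L' i) (L j + L' j)) ∧
      (Q.card : ℝ) / (16 * Kst ^ 9) ≤
        (((Q ∩ Finset.univ.biUnion fun i => L i + L' i)).card : ℝ) := by
  have hK1 : 1 ≤ Kst := hKst ▸ le_max_left 1 K
  have hKK : K ≤ Kst := hKst ▸ le_max_right 1 K
  exact stmt15_general hK1 hη0 hη hpK hΛ hQ (le_trans (by gcongr) hT)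
    (le_trans (by gcongr; exact le_max_left _ _) hQcard)
end
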